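/- arXiv:1505.08162 — 7 statements merged into one kernel-verified Lean document; each statement's English description precedes it below -/
import Mathlib

section
/- Let P be a finite poset and let R ⊆ Inc(P). Then R is reversible if and only if R contains no alternating cycle. -/
/-!
Say that a pair `q` of `R` may follow a pair `p` of `R` if `p.1 ≤ q.2` in the poset. If a linear
extension `L` reverses `R`, then `p.1 ≤ q.2 < q.1` in `L`, so a walk from `p` to `q` forces
`p.1 ≤ q.2` in `L`; for a closed walk, where `q = p`, this contradicts `p.2 < p.1`.

Conversely, the transitive closure of the order and the relations `y ≤ x`, `(x, y) ∈ R`, consists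
of the `a ≤ b` and of the pairs `a ≤ p.2`, `q.1 ≤ b` with a walk from `p` to `q`. A failure of
antisymmetry closes up a walk, so in the absence of closed walks this closure is a partial order,
and any linear order extending it reverses `R`. Closed walks are alternating cycles, except for
those of length one, which are pairs `x ≤ y` in `R`.
-/

/-- `L` is a linear extension of the partial order relation `r`:
a linear order on the ground set extending `r`. -/
def IsLinExt {α : Type*} (r : α → α → Prop) (L : α → α → Prop) : Prop :=
  IsLinearOrder α L ∧ ∀ x y : α, r x y → L x y

/-- `Ls` is a realizer of size `t` of the partial order relation `r`. -/
def IsRealizer {α : Type*} (r : α → α → Prop) {t : ℕ} (Ls : Fin t → (α → α → Prop)) : Prop :=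
  (∀ j, IsLinExt r (Ls j)) ∧ ∀ x y : α, r x y ↔ ∀ j, Ls j x y

/-- The poset with order relation `r` has a realizer of size `t`,
i.e. its dimension is at most `t`. -/
def HasDimLE {α : Type*} (r : α → α → Prop) (t : ℕ) : Prop :=
  ∃ Ls : Fin t → (α → α → Prop), IsRealizer r Ls

/-- `x` and `y` are incomparable in the partial order `r`. -/
def Incomp {α : Type*} (r : α → α → Prop) (x y : α) : Prop :=
  ¬ r x y ∧ ¬ r y x

/-- A set `R` of ordered pairs of incomparable elements is reversible when there
is a linear extension `L` of `r` with `x > y` in `L` for every `(x, y) ∈ R`. -/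
def Reversible {α : Type*} (r : α → α → Prop) (R : Set (α × α)) : Prop :=
  ∃ L : α → α → Prop, IsLinExt r L ∧ ∀ p ∈ R, L p.2 p.1 ∧ p.1 ≠ p.2

/-- `R` contains an alternating cycle: pairs `(x₀,y₀),…,(x_{k-1},y_{k-1})` in `R`
with `k ≥ 2` and `x_i ≤ y_{i+1}` in `r` cyclically. -/
def HasAltCycle {α : Type*} (r : α → α → Prop) (R : Set (α × α)) : Prop :=
  ∃ (k : ℕ) (p : ℕ → α × α), 2 ≤ k ∧ (∀ i < k, p i ∈ R) ∧
    ∀ i < k, r (p i).1 (p ((i + 1) % k)).2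

section AltStep

open Relation

/-- `q` may follow `p` in an alternating cycle in `R`. The relation lives on the subtype `R`, so
that walks carry the membership of their vertices in `R`. -/
def AltStep {α : Type*} (r : α → α → Prop) (R : Set (α × α)) (p q : R) : Prop :=
  r p.1.1 q.1.2

/-- The transitive closure of the order `r` and the relations `y ≤ x` for `(x, y) ∈ R`. A chain
in this closure is recorded as the walk of the pairs of `R` it uses, from the first to the last;
the order relations between consecutive pairs are absorbed in `AltStep`. -/
def ReversalOrder {α : Type*} (r : α → α → Prop) (R : Set (α × α)) (a b : α) : Prop :=
  r a b ∨ ∃ p q : R, r a p.1.2 ∧ ReflTransGen (AltStep r R) p q ∧ r q.1.1 b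

lemma exists_seq_of_transGen {β : Type*} {s : β → β → Prop} {a b : β} (h : TransGen s a b) :
    ∃ (n : ℕ) (f : ℕ → β), 0 < n ∧ f 0 = a ∧ f n = b ∧ ∀ i < n, s (f i) (f (i + 1)) := by
  induction h using TransGen.head_induction_on with
  | @single a hab =>
    exact ⟨1, fun i => i.casesOn a fun _ => b, one_pos, rfl, rfl, by simpa using hab⟩
  | @head a c hac _ ih =>
    obtain ⟨n, f, _, rfl, hn, hf⟩ := ih
    refine ⟨n + 1, fun i => i.casesOn a f, n.succ_pos, rfl, hn, ?_⟩
    rintro (_ | i) hi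
    · exact hac
    · exact hf i (Nat.lt_of_succ_lt_succ hi)

variable {α : Type*} {r : α → α → Prop} {R : Set (α × α)}

lemma exists_transGen_altStep_self_of_hasAltCycle (h : HasAltCycle r R) :
    ∃ p, TransGen (AltStep r R) p p := by
  obtain ⟨k, p, hk, hpR, hp⟩ := h
  have hk0 : 0 < k := by omega
  let f (i : ℕ) : R := ⟨p (i % k), hpR _ (Nat.mod_lt i hk0)⟩
  have hstep (i : ℕ) : AltStep r R (f i) (f (i + 1)) := by
    simpa only [AltStep, f, Nat.mod_add_mod] using hp (i % k) (Nat.mod_lt i hk0)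
  have hclosed : f k = f 0 := by simp only [f, Nat.mod_self, Nat.zero_mod]
  have hwalk : TransGen (AltStep r R) (f 0) (f k) :=
    Nat.rel_of_forall_rel_succ_of_lt _ (fun i => .single (hstep i)) hk0
  exact ⟨f 0, hclosed ▸ hwalk⟩

lemma hasAltCycle_of_transGen_altStep_self (hR : ∀ p ∈ R, ¬ r p.1 p.2) {p : R}
    (h : TransGen (AltStep r R) p p) : HasAltCycle r R := by
  obtain ⟨k, f, hk, rfl, hclosed, hf⟩ := exists_seq_of_transGen h
  have hk1 : k ≠ 1 := by
    rintro rfl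
    have hloop : AltStep r R (f 0) (f 0) := by simpa only [hclosed] using hf 0 one_pos
    exact hR _ (f 0).2 hloop
  refine ⟨k, fun i => f i, by omega, fun i _ => (f i).2, fun i hi => ?_⟩
  have hmod : f ((i + 1) % k) = f (i + 1) := by
    obtain hlt | rfl := (Nat.succ_le_of_lt hi).lt_or_eq
    · rw [Nat.mod_eq_of_lt hlt]
    · rw [Nat.mod_self, hclosed]
  have hstep : AltStep r R (f i) (f ((i + 1) % k)) := hmod ▸ hf i hi
  exact hstep

lemma rel_of_transGen_altStep {L : α → α → Prop} [IsTrans α L] (hrL : ∀ x y, r x y → L x y)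
    (hRL : ∀ p ∈ R, L p.2 p.1) {p q : R} (h : TransGen (AltStep r R) p q) : L p.1.1 q.1.2 := by
  induction h with
  | single hpq => exact hrL _ _ hpq
  | @tail q s _ hqs ih => exact trans_of L (trans_of L ih (hRL q q.2)) (hrL _ _ hqs)

namespace ReversalOrder

lemma of_rel {a b : α} (h : r a b) : ReversalOrder r R a b :=
  Or.inl h

lemma of_mem [Std.Refl r] {p : α × α} (hp : p ∈ R) : ReversalOrder r R p.2 p.1 :=
  Or.inr ⟨⟨p, hp⟩, ⟨p, hp⟩, refl_of r _, .refl, refl_of r _⟩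

protected lemma trans [IsTrans α r] {a b c : α} :
    ReversalOrder r R a b → ReversalOrder r R b c → ReversalOrder r R a c := by
  rintro (hab | ⟨p, q, hap, hpq, hqb⟩) (hbc | ⟨p', q', hbp', hpq', hqc'⟩)
  · exact Or.inl (trans_of r hab hbc)
  · exact Or.inr ⟨p', q', trans_of r hab hbp', hpq', hqc'⟩
  · exact Or.inr ⟨p, q, hap, hpq, trans_of r hqb hbc⟩
  · have hqp' : AltStep r R q p' := trans_of r hqb hbp'
    exact Or.inr ⟨p, q', hap, (hpq.tail hqp').trans hpq', hqc'⟩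

protected lemma antisymm [IsPartialOrder α r] (hacyc : ∀ p, ¬ TransGen (AltStep r R) p p)
    {a b : α} : ReversalOrder r R a b → ReversalOrder r R b a → a = b := by
  have not_closed {p q : R} (hpq : ReflTransGen (AltStep r R) p q) (hqp : r q.1.1 p.1.2) : False :=
    hacyc p (.tail' hpq hqp)
  rintro (hab | ⟨p, q, hap, hpq, hqb⟩) (hba | ⟨p', q', hbp', hpq', hqa'⟩)
  · exact antisymm_of r hab hba
  · exact (not_closed hpq' (trans_of r hqa' (trans_of r hab hbp'))).elim
  · exact (not_closed hpq (trans_of r hqb (trans_of r hba hap))).elim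
  · have hqp' : AltStep r R q p' := trans_of r hqb hbp'
    exact (not_closed ((hpq.tail hqp').trans hpq') (trans_of r hqa' hap)).elim

lemma isPartialOrder [IsPartialOrder α r] (hacyc : ∀ p, ¬ TransGen (AltStep r R) p p) :
    IsPartialOrder α (ReversalOrder r R) where
  refl a := of_rel (refl_of r a)
  trans _ _ _ := ReversalOrder.trans
  antisymm _ _ := ReversalOrder.antisymm hacyc

end ReversalOrder

theorem reversible_iff_forall_not_transGen_altStep_self [IsPartialOrder α r] :
    Reversible r R ↔ ∀ p, ¬ TransGen (AltStep r R) p p := by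
  constructor
  · rintro ⟨L, ⟨_, hrL⟩, hRL⟩ p hp
    have hle : L p.1.1 p.1.2 := rel_of_transGen_altStep hrL (fun q hq => (hRL q hq).1) hp
    obtain ⟨hge, hne⟩ := hRL p p.2
    exact hne (antisymm_of L hle hge)
  · intro hacyc
    have := ReversalOrder.isPartialOrder hacyc
    obtain ⟨L, hL, hle⟩ := extend_partialOrder (ReversalOrder r R)
    refine ⟨L, ⟨hL, fun x y hxy => hle x y (.of_rel hxy)⟩, fun p hp => ⟨hle _ _ (.of_mem hp), ?_⟩⟩
    intro heq
    have hloop : AltStep r R ⟨p, hp⟩ ⟨p, hp⟩ := show r p.1 p.2 from heq ▸ refl_of r p.1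
    exact hacyc _ (.single hloop)

end AltStep

theorem reversible_iff_no_alternating_cycle_general {α : Type*}
    (r : α → α → Prop) (hr : IsPartialOrder α r)
    (R : Set (α × α)) (hR : ∀ p ∈ R, ¬ r p.1 p.2) :
    Reversible r R ↔ ¬ HasAltCycle r R := by
  rw [reversible_iff_forall_not_transGen_altStep_self, ← not_exists, not_iff_not]
  exact ⟨fun ⟨_, hp⟩ => hasAltCycle_of_transGen_altStep_self hR hp,
    exists_transGen_altStep_self_of_hasAltCycle⟩

/-- A set `R ⊆ Inc(P)` is reversible if and only if it contains
no alternating cycle. -/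
theorem reversible_iff_no_alternating_cycle {α : Type*} [Fintype α]
    (r : α → α → Prop) (hr : IsPartialOrder α r)
    (R : Set (α × α)) (hR : ∀ p ∈ R, Incomp r p.1 p.2) :
    Reversible r R ↔ ¬ HasAltCycle r R :=
  reversible_iff_no_alternating_cycle_general r hr R fun p hp => (hR p hp).1
end

section
/- For all integers d ≥ 2 and n ≥ 2, the product poset (Fin n)^d — d-tuples with entries in {0,1,…,n−1} ordered coordinatewise — has dimension exactly d: it has a realizer of size d but no realizer of size d − 1. -/
section UpperBound

theorem exists_isLinExt_of_monotone {α β : Type*} [PartialOrder α] [LinearOrder β] {f : α → β}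
    (hf : Monotone f) :
    ∃ L : α → α → Prop, IsLinExt (· ≤ ·) L ∧ ∀ x y, L x y → f x ≤ f y := by
  let key : α → β ×ₗ LinearExtension α := fun x => toLex (f x, toLinearExtension x)
  have key_injective : key.Injective := fun x y h => congrArg (fun p => (ofLex p).2) h
  have key_monotone : Monotone key :=
    Prod.Lex.toLex_mono.comp (hf.prodMk toLinearExtension.monotone)
  have key_isLinearOrder : IsLinearOrder α (key ⁻¹'o (· ≤ ·)) :=
    (RelEmbedding.preimage ⟨key, key_injective⟩ (· ≤ ·)).isLinearOrder
  exact ⟨key ⁻¹'o (· ≤ ·), ⟨key_isLinearOrder, fun _ _ h => key_monotone h⟩,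
    fun x y h => Prod.Lex.monotone_fst (key x) (key y) h⟩

theorem hasDimLE_card_of_isLinExt {α ι : Type*} [Fintype ι] {r : α → α → Prop}
    {L : ι → α → α → Prop} (hL : ∀ i, IsLinExt r (L i)) (hr : ∀ x y, (∀ i, L i x y) → r x y) :
    HasDimLE r (Fintype.card ι) := by
  let e := Fintype.equivFin ι
  exact ⟨fun j => L (e.symm j), fun j => hL _, fun x y =>
    ⟨fun h j => (hL _).2 x y h, fun h => hr x y (e.symm.forall_congr_right.1 h)⟩⟩

theorem hasDimLE_card_of_orderEmbedding {α ι : Type*} {β : ι → Type*} [Fintype ι] [PartialOrder α]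
    [∀ i, LinearOrder (β i)] (f : α ↪o ∀ i, β i) :
    HasDimLE (fun x y : α => x ≤ y) (Fintype.card ι) := by
  choose L hL le_of_L using fun i =>
    exists_isLinExt_of_monotone ((Function.monotone_eval i).comp f.monotone)
  exact hasDimLE_card_of_isLinExt hL fun x y h => f.le_iff_le.1 fun i => le_of_L i x y (h i)

end UpperBound

section LowerBound

/-- The families `a` and `b` form a standard example in the relation `r`: `a i` lies below `b k`
exactly when `i ≠ k`. The usual requirement that each family be an antichain is left out, as the
lower bound on the dimension only involves the relations between the two families. -/
def IsStandardExample {α ι : Type*} (r : α → α → Prop) (a b : ι → α) : Prop :=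
  ∀ i k, r (a i) (b k) ↔ i ≠ k

namespace IsStandardExample

variable {α ι : Type*} {r : α → α → Prop} {a b : ι → α}

theorem eq_of_reversed (h : IsStandardExample r a b) {L : α → α → Prop} (hL : IsLinExt r L)
    {i k : ι} (hi : ¬ L (a i) (b i)) (hk : ¬ L (a k) (b k)) : i = k := by
  obtain ⟨_, hrL⟩ := hL
  by_contra hik
  have ai_bk : L (a i) (b k) := hrL _ _ ((h i k).2 hik)
  have bk_ak : L (b k) (a k) := (total_of L (a k) (b k)).resolve_left hk
  have ak_bi : L (a k) (b i) := hrL _ _ ((h k i).2 (Ne.symm hik))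
  exact hi (_root_.trans ai_bk (_root_.trans bk_ak ak_bi))

theorem exists_reversed (h : IsStandardExample r a b) {t : ℕ}
    {Ls : Fin t → α → α → Prop} (hLs : IsRealizer r Ls) (i : ι) : ∃ j, ¬ Ls j (a i) (b i) :=
  not_forall.1 fun hall => (h i i).1 ((hLs.2 _ _).2 hall) rfl

theorem card_le_of_hasDimLE [Fintype ι] (h : IsStandardExample r a b) {t : ℕ}
    (ht : HasDimLE r t) : Fintype.card ι ≤ t := by
  obtain ⟨Ls, hLs⟩ := ht
  choose f hf using h.exists_reversed hLs
  have f_injective : f.Injective := fun i k hik =>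
    h.eq_of_reversed (hLs.1 (f i)) (hf i) (hik ▸ hf k)
  simpa using Fintype.card_le_of_injective f f_injective

end IsStandardExample

theorem isStandardExample_update_of_strongLT {ι : Type*} {β : ι → Type*} [DecidableEq ι]
    [∀ i, Preorder (β i)] {x y : ∀ i, β i} (hxy : StrongLT x y) :
    IsStandardExample (fun u v : ∀ i, β i => u ≤ v)
      (fun i => Function.update x i (y i)) (fun i => Function.update y i (x i)) := by
  intro i k
  refine update_le_iff.trans ⟨?_, fun hik => ⟨?_, fun j _ => ?_⟩⟩
  · rintro ⟨hle, -⟩ rfl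
    exact (hxy i).not_ge (by simpa using hle)
  · simp [hik]
  · exact le_update_iff.2 ⟨le_rfl, fun l _ => (hxy l).le⟩ j

end LowerBound

theorem grid_dim_general {ι : Type*} [Fintype ι] (β : ι → Type*) [∀ i, LinearOrder (β i)]
    [∀ i, Nontrivial (β i)] :
    IsLeast {t | HasDimLE (fun u v : ∀ i, β i => u ≤ v) t} (Fintype.card ι) := by
  classical
  choose x y hxy using fun i => exists_pair_lt (β i)
  exact ⟨hasDimLE_card_of_orderEmbedding (RelEmbedding.refl _),
    fun _ ht => (isStandardExample_update_of_strongLT hxy).card_le_of_hasDimLE ht⟩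

/-- For all `d ≥ 2` and `n ≥ 2`, the product poset `(Fin n)^d`, ordered
coordinatewise, has dimension exactly `d`: it has a realizer of size `d`
but none of size `d - 1`. -/
theorem grid_dim (d n : ℕ) (hd : 2 ≤ d) (hn : 2 ≤ n) :
    HasDimLE (fun u v : Fin d → Fin n => ∀ i, u i ≤ v i) d ∧
      ¬ HasDimLE (fun u v : Fin d → Fin n => ∀ i, u i ≤ v i) (d - 1) := by
  have : Nontrivial (Fin n) := Fin.nontrivial_iff_two_le.2 hn
  obtain ⟨hdim, hmin⟩ := Fintype.card_fin d ▸ grid_dim_general fun _ : Fin d => Fin n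
  exact ⟨hdim, fun h => absurd (hmin h) (by omega)⟩
end

section
/- Let P be a finite poset with ground set X, let w ∈ X, and let X', X'' ⊆ X satisfy X' ∪ X'' = X and X' ∩ X'' = {w}. Assume that whenever x ∈ X' \ {w} and y ∈ X'' \ {w} are comparable in P, the comparability passes through w: if x < y in P then x < w and w < y in P, and if y < x in P then y < w and w < x in P. Let M' be a linear extension of the subposet induced on X' of the form A < w < B, and let M'' be a linear extension of the subposet induced on X'' of the form C < w < D. Then the linear order M = [A < C < w < D < B] is a linear extension of P; moreover, the restriction of M to X' is M' and the restriction of M to X'' is M''. -/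
/-- `L` restricted to `S` is a linear order on `S` extending `r` on `S`. -/
def IsLinExtOn {α : Type*} (r : α → α → Prop) (S : Set α) (L : α → α → Prop) : Prop :=
  (∀ x ∈ S, L x x) ∧
  (∀ x ∈ S, ∀ y ∈ S, L x y → L y x → x = y) ∧
  (∀ x ∈ S, ∀ y ∈ S, ∀ z ∈ S, L x y → L y z → L x z) ∧
  (∀ x ∈ S, ∀ y ∈ S, L x y ∨ L y x) ∧
  (∀ x ∈ S, ∀ y ∈ S, r x y → L x y)

open Classical in
/-- The region of `x` in the merged linear order `[A < C < w < D < B]`: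
`0` for `A` (elements of `X' \ {w}` below `w` in `M'`), `1` for `C`
(elements of `X'' \ {w}` below `w` in `M''`), `2` for `w`, `3` for `D`, `4` for `B`. -/
noncomputable def mergeRegion {α : Type*} (X' : Set α) (w : α)
    (M' M'' : α → α → Prop) (x : α) : ℕ :=
  if x = w then 2
  else if x ∈ X' then (if M' x w then 0 else 4)
  else (if M'' x w then 1 else 3)

/-- The merged relation `M = [A < C < w < D < B]` obtained from
`M' = [A < w < B]` on `X'` and `M'' = [C < w < D]` on `X''`. -/
def mergeRel {α : Type*} (X' X'' : Set α) (w : α)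
    (M' M'' : α → α → Prop) (x y : α) : Prop :=
  mergeRegion X' w M' M'' x < mergeRegion X' w M' M'' y ∨
    (mergeRegion X' w M' M'' x = mergeRegion X' w M' M'' y ∧
      (x = y ∨ (x ∈ X' ∧ y ∈ X' ∧ M' x y) ∨ (x ∈ X'' ∧ y ∈ X'' ∧ M'' x y)))

namespace IsLinExtOn

variable {α : Type*} {r L : α → α → Prop} {S T : Set α} {x y z : α}

lemma refl (h : IsLinExtOn r S L) (hx : x ∈ S) : L x x :=
  h.1 x hx

lemma antisymm (h : IsLinExtOn r S L) (hx : x ∈ S) (hy : y ∈ S) (hxy : L x y) (hyx : L y x) :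
    x = y :=
  h.2.1 x hx y hy hxy hyx

lemma trans (h : IsLinExtOn r S L) (hx : x ∈ S) (hy : y ∈ S) (hz : z ∈ S)
    (hxy : L x y) (hyz : L y z) : L x z :=
  h.2.2.1 x hx y hy z hz hxy hyz

lemma total (h : IsLinExtOn r S L) (hx : x ∈ S) (hy : y ∈ S) : L x y ∨ L y x :=
  h.2.2.2.1 x hx y hy

lemma of_rel (h : IsLinExtOn r S L) (hx : x ∈ S) (hy : y ∈ S) (hxy : r x y) : L x y :=
  h.2.2.2.2 x hx y hy hxy

lemma mono (h : IsLinExtOn r T L) (hST : S ⊆ T) : IsLinExtOn r S L :=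
  ⟨fun _ hx => h.refl (hST hx),
    fun _ hx _ hy => h.antisymm (hST hx) (hST hy),
    fun _ hx _ hy _ hz => h.trans (hST hx) (hST hy) (hST hz),
    fun _ hx _ hy => h.total (hST hx) (hST hy),
    fun _ hx _ hy => h.of_rel (hST hx) (hST hy)⟩

lemma congr {L' : α → α → Prop} (h : IsLinExtOn r S L)
    (hL : ∀ x ∈ S, ∀ y ∈ S, (L' x y ↔ L x y)) : IsLinExtOn r S L' := by
  refine ⟨fun x hx => (hL x hx x hx).2 (h.refl hx), fun x hx y hy hxy hyx => ?_,
    fun x hx y hy z hz hxy hyz => ?_, fun x hx y hy => ?_,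
    fun x hx y hy hxy => (hL x hx y hy).2 (h.of_rel hx hy hxy)⟩
  · exact h.antisymm hx hy ((hL x hx y hy).1 hxy) ((hL y hy x hx).1 hyx)
  · exact (hL x hx z hz).2 (h.trans hx hy hz ((hL x hx y hy).1 hxy) ((hL y hy z hz).1 hyz))
  · exact (h.total hx hy).imp (hL x hx y hy).2 (hL y hy x hx).2

end IsLinExtOn

/-- The lexicographic relation comparing values of `ρ` first and breaking ties by `T`. -/
def lexRel {α β : Type*} [LT β] (ρ : α → β) (T : α → α → Prop) (x y : α) : Prop :=
  ρ x < ρ y ∨ (ρ x = ρ y ∧ T x y)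

section lexRel

variable {α β : Type*} {ρ : α → β} {r T : α → α → Prop} {x y : α}

lemma le_of_lexRel [Preorder β] (h : lexRel ρ T x y) : ρ x ≤ ρ y :=
  h.elim le_of_lt fun h => h.1.le

lemma lexRel_iff_of_eq [Preorder β] (h : ρ x = ρ y) : lexRel ρ T x y ↔ T x y := by
  simp [lexRel, h]

lemma lexRel_iff_of_monotone [PartialOrder β] (hT : T x y ∨ T y x)
    (hxy : T x y → ρ x ≤ ρ y) (hyx : T y x → ρ y ≤ ρ x) : lexRel ρ T x y ↔ T x y := by
  constructor
  · rintro (hlt | ⟨-, h⟩)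
    · exact hT.resolve_right fun h => (hyx h).not_gt hlt
    · exact h
  · exact fun h => (hxy h).lt_or_eq.imp_right fun heq => ⟨heq, h⟩

lemma lexRel_trans [Preorder β] {z : α}
    (hT : ∀ c, ∀ x ∈ ρ ⁻¹' {c}, ∀ y ∈ ρ ⁻¹' {c}, ∀ z ∈ ρ ⁻¹' {c}, T x y → T y z → T x z)
    (hxy : lexRel ρ T x y) (hyz : lexRel ρ T y z) : lexRel ρ T x z := by
  rcases hxy with hlt | ⟨heq, hxy⟩
  · exact Or.inl (hlt.trans_le (le_of_lexRel hyz))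
  rcases hyz with hlt | ⟨heq', hyz⟩
  · exact Or.inl (heq.trans_lt hlt)
  · exact Or.inr ⟨heq.trans heq', hT _ x heq y rfl z heq'.symm hxy hyz⟩

theorem isLinExt_lexRel [LinearOrder β] (hρ : ∀ x y, r x y → ρ x ≤ ρ y)
    (hT : ∀ c, IsLinExtOn r (ρ ⁻¹' {c}) T) : IsLinExt r (lexRel ρ T) := by
  have antisymm (x y : α) (hxy : lexRel ρ T x y) (hyx : lexRel ρ T y x) : x = y := by
    have heq : ρ x = ρ y := (le_of_lexRel hxy).antisymm (le_of_lexRel hyx)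
    exact (hT (ρ y)).antisymm heq rfl ((lexRel_iff_of_eq heq).1 hxy)
      ((lexRel_iff_of_eq heq.symm).1 hyx)
  have total (x y : α) : lexRel ρ T x y ∨ lexRel ρ T y x := by
    rcases lt_trichotomy (ρ x) (ρ y) with hlt | heq | hgt
    · exact Or.inl (Or.inl hlt)
    · rw [lexRel_iff_of_eq heq, lexRel_iff_of_eq heq.symm]
      exact (hT (ρ y)).total heq rfl
    · exact Or.inr (Or.inl hgt)
  refine ⟨{ refl := fun x => ?_, trans := fun x y z => ?_, antisymm, total }, fun x y hxy => ?_⟩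
  · exact Or.inr ⟨rfl, (hT (ρ x)).refl rfl⟩
  · exact lexRel_trans fun c => (hT c).2.2.1
  · exact (hρ x y hxy).lt_or_eq.imp_right fun heq => ⟨heq, (hT (ρ y)).of_rel heq rfl hxy⟩

end lexRel

/-- The reflexive closure of the union of `M'` on `X'` and `M''` on `X''`, which breaks the ties
between regions in `mergeRel`. -/
def glueRel {α : Type*} (X' X'' : Set α) (M' M'' : α → α → Prop) (x y : α) : Prop :=
  x = y ∨ (x ∈ X' ∧ y ∈ X' ∧ M' x y) ∨ (x ∈ X'' ∧ y ∈ X'' ∧ M'' x y)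

open Classical in
/-- The position of `x` relative to the pivot `w` in the linear order `L`: `lo` below `w`, `mid`
at `w` and `hi` otherwise. It is the common form of `mergeRegion` on the two sides. -/
noncomputable def pivotRank {α β : Type*} (L : α → α → Prop) (w : α) (lo mid hi : β) (x : α) : β :=
  if x = w then mid else if L x w then lo else hi

section merge

variable {α : Type*} {r : α → α → Prop} {w : α} {X' X'' : Set α} {M' M'' : α → α → Prop} {x y : α}

lemma glueRel_comm : glueRel X' X'' M' M'' x y ↔ glueRel X'' X' M'' M' x y := by
  rw [glueRel, glueRel, or_comm (a := x ∈ X' ∧ _)]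

lemma glueRel_iff_left (hI : (X' ∩ X'').Subsingleton) (hrefl : ∀ x ∈ X', M' x x)
    (hx : x ∈ X') (hy : y ∈ X') : glueRel X' X'' M' M'' x y ↔ M' x y := by
  constructor
  · rintro (rfl | ⟨-, -, h⟩ | ⟨hx'', hy'', -⟩)
    · exact hrefl x hx
    · exact h
    · obtain rfl : x = y := hI ⟨hx, hx''⟩ ⟨hy, hy''⟩
      exact hrefl x hx
  · exact fun h => Or.inr (Or.inl ⟨hx, hy, h⟩)

lemma glueRel_iff_right (hI : (X' ∩ X'').Subsingleton) (hrefl : ∀ x ∈ X'', M'' x x)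
    (hx : x ∈ X'') (hy : y ∈ X'') : glueRel X' X'' M' M'' x y ↔ M'' x y :=
  glueRel_comm.trans (glueRel_iff_left (Set.inter_comm X' X'' ▸ hI) hrefl hx hy)

lemma IsLinExtOn.pivotRank_le_pivotRank {β : Type*} [Preorder β] {L : α → α → Prop} {S : Set α}
    {lo mid hi : β} (hL : IsLinExtOn r S L) (hw : w ∈ S) (hlo : lo ≤ mid) (hhi : mid ≤ hi)
    (hx : x ∈ S) (hy : y ∈ S) (hxy : L x y) :
    pivotRank L w lo mid hi x ≤ pivotRank L w lo mid hi y := by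
  have below (hyw : L y w) : L x w := hL.trans hx hy hw hxy hyw
  have at_pivot (hxw : x = w) (hyw : L y w) : y = w := hL.antisymm hy hw hyw (hxw ▸ hxy)
  unfold pivotRank
  grind

lemma mergeRegion_eq_pivotRank_left (hx : x ∈ X') :
    mergeRegion X' w M' M'' x = pivotRank M' w 0 2 4 x := by
  simp [mergeRegion, pivotRank, hx]

lemma mergeRegion_eq_pivotRank_right (hI : X' ∩ X'' ⊆ {w}) (hx : x ∈ X'') :
    mergeRegion X' w M' M'' x = pivotRank M'' w 1 2 3 x := by
  by_cases hxw : x = w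
  · simp [mergeRegion, pivotRank, hxw]
  · have hx' : x ∉ X' := fun hx' => hxw (hI ⟨hx', hx⟩)
    simp [mergeRegion, pivotRank, hxw, hx']

lemma mergeRegion_le_left (hM' : IsLinExtOn r X' M') (hw : w ∈ X') (hx : x ∈ X') (hy : y ∈ X')
    (hxy : M' x y) : mergeRegion X' w M' M'' x ≤ mergeRegion X' w M' M'' y := by
  rw [mergeRegion_eq_pivotRank_left hx, mergeRegion_eq_pivotRank_left hy]
  exact hM'.pivotRank_le_pivotRank hw (by norm_num) (by norm_num) hx hy hxy

lemma mergeRegion_le_right (hM'' : IsLinExtOn r X'' M'') (hI : X' ∩ X'' ⊆ {w}) (hw : w ∈ X'')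
    (hx : x ∈ X'') (hy : y ∈ X'') (hxy : M'' x y) :
    mergeRegion X' w M' M'' x ≤ mergeRegion X' w M' M'' y := by
  rw [mergeRegion_eq_pivotRank_right hI hx, mergeRegion_eq_pivotRank_right hI hy]
  exact hM''.pivotRank_le_pivotRank hw (by norm_num) (by norm_num) hx hy hxy

lemma even_mergeRegion_iff (hw : w ∈ X') : Even (mergeRegion X' w M' M'' x) ↔ x ∈ X' := by
  by_cases hxw : x = w
  · simp [mergeRegion, hxw, hw]
  · unfold mergeRegion
    split_ifs <;> simp [*, Nat.even_iff]

lemma mergeRegion_preimage_subset (hU : X' ∪ X'' = Set.univ) (hw : w ∈ X') (c : ℕ) :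
    mergeRegion X' w M' M'' ⁻¹' {c} ⊆ X' ∨ mergeRegion X' w M' M'' ⁻¹' {c} ⊆ X'' := by
  rcases Nat.even_or_odd c with hc | hc
  · left
    rintro x rfl
    exact (even_mergeRegion_iff hw).1 hc
  · right
    rintro x rfl
    have hx : x ∉ X' := fun hx => Nat.not_even_iff_odd.2 hc ((even_mergeRegion_iff hw).2 hx)
    exact (hU.ge (Set.mem_univ x)).resolve_left hx

lemma isLinExtOn_glueRel_preimage (hU : X' ∪ X'' = Set.univ) (hI : X' ∩ X'' = {w})
    (hM' : IsLinExtOn r X' M') (hM'' : IsLinExtOn r X'' M'') (c : ℕ) :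
    IsLinExtOn r (mergeRegion X' w M' M'' ⁻¹' {c}) (glueRel X' X'' M' M'') := by
  have hsub : (X' ∩ X'').Subsingleton := hI ▸ Set.subsingleton_singleton
  have hw : w ∈ X' ∩ X'' := hI.ge rfl
  rcases mergeRegion_preimage_subset hU hw.1 c with hc | hc
  · exact (hM'.congr fun _ hx _ hy => glueRel_iff_left hsub hM'.1 hx hy).mono hc
  · exact (hM''.congr fun _ hx _ hy => glueRel_iff_right hsub hM''.1 hx hy).mono hc

lemma mergeRel_eq_lexRel :
    mergeRel X' X'' w M' M'' = lexRel (mergeRegion X' w M' M'') (glueRel X' X'' M' M'') :=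
  rfl

lemma mergeRel_iff_left (hI : X' ∩ X'' = {w}) (hM' : IsLinExtOn r X' M')
    (hx : x ∈ X') (hy : y ∈ X') : mergeRel X' X'' w M' M'' x y ↔ M' x y := by
  have hsub : (X' ∩ X'').Subsingleton := hI ▸ Set.subsingleton_singleton
  have hw : w ∈ X' := (hI.ge rfl).1
  rw [mergeRel_eq_lexRel, lexRel, glueRel_iff_left hsub hM'.1 hx hy]
  exact lexRel_iff_of_monotone (hM'.total hx hy) (mergeRegion_le_left hM' hw hx hy)
    (mergeRegion_le_left hM' hw hy hx)

lemma mergeRel_iff_right (hI : X' ∩ X'' = {w}) (hM'' : IsLinExtOn r X'' M'')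
    (hx : x ∈ X'') (hy : y ∈ X'') : mergeRel X' X'' w M' M'' x y ↔ M'' x y := by
  have hsub : (X' ∩ X'').Subsingleton := hI ▸ Set.subsingleton_singleton
  have hw : w ∈ X'' := (hI.ge rfl).2
  rw [mergeRel_eq_lexRel, lexRel, glueRel_iff_right hsub hM''.1 hx hy]
  exact lexRel_iff_of_monotone (hM''.total hx hy) (mergeRegion_le_right hM'' hI.le hw hx hy)
    (mergeRegion_le_right hM'' hI.le hw hy hx)

lemma le_of_rel_of_pass {β : Type*} [Preorder β] {f : α → β} (hw : w ∈ X' ∩ X'')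
    (hU : X' ∪ X'' = Set.univ)
    (hpass : ∀ x ∈ X' \ {w}, ∀ y ∈ X'' \ {w},
      (r x y → r x w ∧ r w y) ∧ (r y x → r y w ∧ r w x))
    (hf' : ∀ x ∈ X', ∀ y ∈ X', r x y → f x ≤ f y)
    (hf'' : ∀ x ∈ X'', ∀ y ∈ X'', r x y → f x ≤ f y) (hxy : r x y) : f x ≤ f y := by
  have cover (z : α) : z ∈ X' ∪ X'' := hU.ge (Set.mem_univ z)
  by_cases hxw : x = w
  · subst hxw
    exact (cover y).elim (hf' x hw.1 y · hxy) (hf'' x hw.2 y · hxy)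
  by_cases hyw : y = w
  · subst hyw
    exact (cover x).elim (hf' x · y hw.1 hxy) (hf'' x · y hw.2 hxy)
  rcases cover x with hx | hx <;> rcases cover y with hy | hy
  · exact hf' x hx y hy hxy
  · obtain ⟨hxw, hwy⟩ := (hpass x ⟨hx, hxw⟩ y ⟨hy, hyw⟩).1 hxy
    exact (hf' x hx w hw.1 hxw).trans (hf'' w hw.2 y hy hwy)
  · obtain ⟨hxw, hwy⟩ := (hpass y ⟨hy, hyw⟩ x ⟨hx, hxw⟩).2 hxy
    exact (hf'' x hx w hw.2 hxw).trans (hf' w hw.1 y hy hwy)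
  · exact hf'' x hx y hy hxy

end merge

theorem merge_rule_general {α : Type*} {r : α → α → Prop} {w : α} {X' X'' : Set α}
    (hU : X' ∪ X'' = Set.univ) (hI : X' ∩ X'' = {w})
    (hpass : ∀ x ∈ X' \ {w}, ∀ y ∈ X'' \ {w},
      (r x y → r x w ∧ r w y) ∧ (r y x → r y w ∧ r w x))
    {M' M'' : α → α → Prop}
    (hM' : IsLinExtOn r X' M') (hM'' : IsLinExtOn r X'' M'') :
    IsLinExt r (mergeRel X' X'' w M' M'') ∧
      (∀ x ∈ X', ∀ y ∈ X', (mergeRel X' X'' w M' M'' x y ↔ M' x y)) ∧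
      (∀ x ∈ X'', ∀ y ∈ X'', (mergeRel X' X'' w M' M'' x y ↔ M'' x y)) := by
  have hw : w ∈ X' ∩ X'' := hI.ge rfl
  have region_le (x y : α) : r x y → mergeRegion X' w M' M'' x ≤ mergeRegion X' w M' M'' y :=
    le_of_rel_of_pass hw hU hpass
      (fun _ hx _ hy hxy => mergeRegion_le_left hM' hw.1 hx hy (hM'.of_rel hx hy hxy))
      (fun _ hx _ hy hxy => mergeRegion_le_right hM'' hI.le hw.2 hx hy (hM''.of_rel hx hy hxy))
  exact ⟨isLinExt_lexRel region_le (isLinExtOn_glueRel_preimage hU hI hM' hM''),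
    fun _ hx _ hy => mergeRel_iff_left hI hM' hx hy,
    fun _ hx _ hy => mergeRel_iff_right hI hM'' hx hy⟩

/-- The merge rule: if `X' ∪ X'' = X`, `X' ∩ X'' = {w}`, every comparability
between `X' \ {w}` and `X'' \ {w}` passes through `w`, and `M' = [A < w < B]`
and `M'' = [C < w < D]` are linear extensions of the subposets induced on `X'`
and `X''`, then `M = [A < C < w < D < B]` is a linear extension of `P` whose
restriction to `X'` is `M'` and whose restriction to `X''` is `M''`. -/
theorem merge_rule {α : Type*} [Fintype α]
    (r : α → α → Prop) (hr : IsPartialOrder α r) (w : α) (X' X'' : Set α)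
    (hU : X' ∪ X'' = Set.univ) (hI : X' ∩ X'' = {w})
    (hpass : ∀ x ∈ X' \ {w}, ∀ y ∈ X'' \ {w},
      (r x y → r x w ∧ r w y) ∧ (r y x → r y w ∧ r w x))
    (M' M'' : α → α → Prop)
    (hM' : IsLinExtOn r X' M') (hM'' : IsLinExtOn r X'' M'') :
    IsLinExt r (mergeRel X' X'' w M' M'') ∧
      (∀ x ∈ X', ∀ y ∈ X', (mergeRel X' X'' w M' M'' x y ↔ M' x y)) ∧
      (∀ x ∈ X'', ∀ y ∈ X'', (mergeRel X' X'' w M' M'' x y ↔ M'' x y)) :=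
  merge_rule_general hU hI hpass hM' hM''
end

section
/- (Product Ramsey Theorem.) For every 4-tuple (r, d, k, m) of positive integers with m ≥ k, there exists an integer n_0 ≥ k with the following property: if X_1,…,X_d are finite sets with |X_i| ≥ n_0 for every i = 1,…,d, and φ assigns to each grid g = T_1 × T_2 × ⋯ × T_d (where each T_j is a k-element subset of X_j) a color φ(g) from a set R of r colors, then there exist a color α ∈ R and m-element subsets H_j ⊆ X_j for each j = 1,…,d such that φ(g) = α for every grid g = T_1 × ⋯ × T_d with T_j a k-element subset of H_j for each j. -/
/-!
Ramsey's theorem for `k`-sets is proved in the off-diagonal form, where the target size `m c`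
depends on the color `c`. Fixing a vertex `x`, Ramsey's theorem for `k`-sets applied to the link
coloring `T ↦ φ (insert x T)` gives a large set `Y` whose link is constantly of some color `c`.
Inside `Y` the target for `c` may be lowered by one, because `x` can be added to any set that is
monochromatic of color `c`.

For products, one coordinate is added at a time. Restrict the new coordinate to a copy of `Fin n`,
where `n` is a Ramsey number, and color a grid in the old coordinates by the function
`Finset (Fin n) → κ` recording the colors of all its extensions. A monochromatic family for this
finite set of colors leaves a single coloring of `Finset (Fin n)`, to which Ramsey's theorem
applies.
-/

section Ramsey

open Filter Finset Function

universe u v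

variable {β : Type u} {κ : Type v} {k n N : ℕ} {m : κ → ℕ}

/-- A set is monochromatic of color `c` for a coloring of `k`-sets if all its `k`-element subsets
receive color `c`. Colorings are defined on all finite sets, and only their values on `k`-sets
matter. -/
def IsMonochromatic (φ : Finset β → κ) (k : ℕ) (H : Finset β) (c : κ) : Prop :=
  ∀ T ⊆ H, #T = k → φ T = c

lemma isMonochromatic_empty_succ (φ : Finset β → κ) (k : ℕ) (c : κ) :
    IsMonochromatic φ (k + 1) ∅ c := by
  intro T hT hTk
  simp [subset_empty.1 hT] at hTk

lemma IsMonochromatic.insert [DecidableEq β] {φ : Finset β → κ} {x : β} {H : Finset β} {c : κ}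
    (hlink : IsMonochromatic (fun T ↦ φ (insert x T)) k H c)
    (hH : IsMonochromatic φ (k + 1) H c) : IsMonochromatic φ (k + 1) (insert x H) c := by
  intro T hT hTk
  by_cases hx : x ∈ T
  · simpa only [insert_erase hx] using
      hlink (T.erase x) (subset_insert_iff.1 hT) (by simp [card_erase_of_mem hx, hTk])
  · exact hH T ((subset_insert_iff_of_notMem hx).1 hT) hTk

/-- The Erdős–Rado arrow `n → (m)ᵏ` in off-diagonal form: for every coloring of the `k`-subsets of
a set with at least `n` elements, some color `c` has a monochromatic set of size `m c`. The colors
are the elements of the type `κ`. -/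
def RamseyArrow (n k : ℕ) (m : κ → ℕ) : Prop :=
  ∀ (β : Type u) (X : Finset β), n ≤ #X → ∀ φ : Finset β → κ,
    ∃ c, ∃ H ⊆ X, #H = m c ∧ IsMonochromatic φ k H c

lemma RamseyArrow.mono (h : RamseyArrow.{u} n k m) (hnN : n ≤ N) : RamseyArrow.{u} N k m :=
  fun β X hX ↦ h β X (hnN.trans hX)

lemma ramseyArrow_zero (hm : ∀ c, m c ≤ n) : RamseyArrow.{u} n 0 m := by
  intro β X hX φ
  obtain ⟨H, hHX, hHm⟩ := exists_subset_card_eq ((hm (φ ∅)).trans hX)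
  exact ⟨φ ∅, H, hHX, hHm, fun T _ hT ↦ congrArg φ (card_eq_zero.1 hT)⟩

lemma ramseyArrow_succ_of_eq_zero {c : κ} (hc : m c = 0) : RamseyArrow.{u} n (k + 1) m :=
  fun _ X _ φ ↦ ⟨c, ∅, empty_subset X, by simp [hc], isMonochromatic_empty_succ φ k c⟩

lemma ramseyArrow_succ [DecidableEq κ] (hm : ∀ c, m c ≠ 0)
    (hlink : RamseyArrow.{u} n k fun _ : κ ↦ N)
    (hlower : ∀ c, RamseyArrow.{u} N (k + 1) (update m c (m c - 1))) :
    RamseyArrow.{u} (n + 1) (k + 1) m := by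
  classical
  intro β X hX φ
  obtain ⟨x, hx⟩ : X.Nonempty := card_pos.1 (by omega)
  obtain ⟨c, Y, hYX, hYN, hY⟩ := hlink β (X.erase x)
    (by rw [card_erase_of_mem hx]; omega) fun T ↦ φ (insert x T)
  obtain ⟨c', H, hHY, hHm, hH⟩ := hlower c β Y hYN.ge φ
  have hHX : H ⊆ X.erase x := hHY.trans hYX
  obtain rfl | hcc' := eq_or_ne c' c
  · have hlinkH : IsMonochromatic (fun T ↦ φ (insert x T)) k H c' :=
      fun T hT ↦ hY T (hT.trans hHY)
    have hxH : x ∉ H := fun hxH ↦ notMem_erase x X (hHX hxH)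
    refine ⟨c', insert x H, insert_subset hx (hHX.trans (erase_subset x X)), ?_, hlinkH.insert hH⟩
    rw [card_insert_of_notMem hxH, hHm, update_self, Nat.sub_one_add_one (hm c')]
  · exact ⟨c', H, hHX.trans (erase_subset x X), by rw [hHm, update_of_ne hcc'], hH⟩

theorem eventually_ramseyArrow [Finite κ] (k : ℕ) (m : κ → ℕ) :
    ∀ᶠ n in atTop, RamseyArrow.{u} n k m := by
  classical
  induction k generalizing m with
  | zero =>
    filter_upwards [eventually_all.2 fun c ↦ eventually_ge_atTop (m c)] with n hn
    exact ramseyArrow_zero hn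
  | succ k ihk =>
    induction m using WellFoundedLT.induction with
    | ind m ihm =>
    by_cases! hm : ∃ c, m c = 0
    · obtain ⟨c, hc⟩ := hm
      exact .of_forall fun n ↦ ramseyArrow_succ_of_eq_zero hc
    · have hlower : ∀ c, update m c (m c - 1) < m :=
        fun c ↦ update_lt_self_iff.2 (Nat.sub_one_lt (hm c))
      obtain ⟨N, hN⟩ := (eventually_all.2 fun c ↦ ihm _ (hlower c)).exists
      obtain ⟨n, hn⟩ := (ihk fun _ ↦ N).exists
      filter_upwards [eventually_ge_atTop (n + 1)] with n' hn'
      exact (ramseyArrow_succ hm hn hN).mono hn'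

end Ramsey

section Product

open Filter Finset Function

universe u v w

variable {ι : Type w}

/-- Coordinates outside `s` are frozen at `B`, so that all coordinates keep the same index type
when `s` grows. -/
lemma eventually_exists_monochromatic_piecewise [DecidableEq ι] (s : Finset ι) (k m : ι → ℕ)
    (κ : Type v) [Finite κ] :
    ∀ᶠ n in atTop, ∀ (β : ι → Type u) (X B : ∀ i, Finset (β i)), (∀ i ∈ s, n ≤ #(X i)) →
      ∀ φ : (∀ i, Finset (β i)) → κ, ∃ c, ∃ H : ∀ i, Finset (β i),
        (∀ i ∈ s, H i ⊆ X i) ∧ (∀ i ∈ s, #(H i) = m i) ∧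
          ∀ T : ∀ i, Finset (β i), (∀ i ∈ s, T i ⊆ H i) → (∀ i ∈ s, #(T i) = k i) →
            φ (s.piecewise T B) = c := by
  induction s using Finset.induction_on generalizing κ with
  | empty => exact .of_forall fun n β X B _ φ ↦ ⟨φ B, X, by simp⟩
  | insert a s ha ih =>
    obtain ⟨n, hn⟩ := (eventually_ramseyArrow (k a) fun _ : κ ↦ m a).exists
    filter_upwards [ih (Finset (Fin n) → κ), eventually_ge_atTop n] with N hN hnN β X B hX φ
    rw [forall_mem_insert] at hX
    obtain ⟨g, hg⟩ := Embedding.exists_of_card_le_finset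
      ((Fintype.card_fin n).trans_le (hnN.trans hX.1))
    obtain ⟨ψ, H, hHX, hHm, hψ⟩ := hN β X B hX.2 fun T S ↦ φ (update T a (S.map g))
    obtain ⟨c, K, -, hKm, hK⟩ := hn (Fin n) univ (card_fin n).ge ψ
    have hH : ∀ i ∈ s, update H a (K.map g) i = H i :=
      fun i hi ↦ update_of_ne (ne_of_mem_of_not_mem hi ha) _ _
    refine ⟨c, update H a (K.map g), ?_, ?_, fun T hTH hTk ↦ ?_⟩
    · rw [forall_mem_insert, update_self]
      exact ⟨coe_subset.1 ((coe_map_subset_range g K).trans hg),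
        fun i hi ↦ (hH i hi).trans_subset (hHX i hi)⟩
    · rw [forall_mem_insert, update_self, card_map]
      exact ⟨hKm, fun i hi ↦ (congrArg card (hH i hi)).trans (hHm i hi)⟩
    · rw [forall_mem_insert] at hTH hTk
      rw [update_self] at hTH
      obtain ⟨S, hSK, hS⟩ := subset_map_iff.1 hTH.1
      have hSk : #S = k a := by rw [← hTk.1, hS, card_map]
      have hTs : ∀ i ∈ s, T i ⊆ H i := fun i hi ↦ hH i hi ▸ hTH.2 i hi
      calc φ ((insert a s).piecewise T B)
          = φ (update (s.piecewise T B) a (S.map g)) := by rw [piecewise_insert, hS]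
        _ = ψ S := congrFun (hψ T hTs hTk.2) S
        _ = c := hK S hSK hSk

theorem product_ramsey_general [Finite ι] (k m : ι → ℕ) (κ : Type v) [Finite κ] :
    ∀ᶠ n in atTop, ∀ (β : ι → Type u) (X : ∀ i, Finset (β i)), (∀ i, n ≤ #(X i)) →
      ∀ φ : (∀ i, Finset (β i)) → κ, ∃ c, ∃ H : ∀ i, Finset (β i),
        (∀ i, H i ⊆ X i) ∧ (∀ i, #(H i) = m i) ∧
          ∀ T : ∀ i, Finset (β i), (∀ i, T i ⊆ H i) → (∀ i, #(T i) = k i) → φ T = c := by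
  classical
  cases nonempty_fintype ι
  filter_upwards [eventually_exists_monochromatic_piecewise univ k m κ] with n hn β X hX φ
  simpa only [mem_univ, true_imp_iff, piecewise_univ] using hn β X X (fun i _ ↦ hX i) φ

end Product

/-- The Product Ramsey Theorem: for every `(r, d, k, m)` with `m ≥ k` there is
`n₀ ≥ k` such that whenever `X₁, …, X_d` are finite sets of size at least `n₀`
and `φ` colors every `k^d`-grid `T₁ × ⋯ × T_d` (each `T_j` a `k`-element subset
of `X_j`) with one of `r` colors, there are a color `α` and `m`-element subsets
`H_j ⊆ X_j` such that every grid contained in `H₁ × ⋯ × H_d` gets color `α`. -/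
theorem product_ramsey (r d k m : ℕ) (hr : 1 ≤ r) (hd : 1 ≤ d) (hk : 1 ≤ k)
    (hm : k ≤ m) :
    ∃ n₀ : ℕ, k ≤ n₀ ∧
      ∀ (β : Fin d → Type) (X : ∀ i, Finset (β i)),
        (∀ i, n₀ ≤ (X i).card) →
        ∀ φ : (∀ i, Finset (β i)) → Fin r,
          ∃ (α : Fin r) (H : ∀ i, Finset (β i)),
            (∀ i, H i ⊆ X i) ∧ (∀ i, (H i).card = m) ∧
            ∀ T : ∀ i, Finset (β i),
              (∀ i, T i ⊆ H i) → (∀ i, (T i).card = k) → φ T = α :=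
  ((Filter.eventually_ge_atTop k).and
    (product_ramsey_general (fun _ : Fin d ↦ k) (fun _ ↦ m) (Fin r))).exists
end

section
/- Let P be a finite poset which is not an antichain, and let w be the width of the subposet of P induced on the set of non-maximal elements P − Max(P). Then the dimension of P is at most w + 1. -/
/-- `A` is an antichain of the order `r` inside the set `S`. -/
def IsAntichainIn {α : Type*} (r : α → α → Prop) (S : Set α) (A : Finset α) : Prop :=
  ↑A ⊆ S ∧ ∀ x ∈ A, ∀ y ∈ A, x ≠ y → ¬ r x y ∧ ¬ r y x

/-- `w` is the width of the subposet of `r` induced on `S`: the maximum size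
of an antichain contained in `S`. -/
def IsWidthOn {α : Type*} (r : α → α → Prop) (S : Set α) (w : ℕ) : Prop :=
  IsGreatest {k | ∃ A : Finset α, IsAntichainIn r S A ∧ A.card = k} w

section IsAntichainIn

variable {α : Type*} {r : α → α → Prop} {S T : Set α} {A B : Finset α} {x y : α}

lemma IsAntichainIn.mono (hA : IsAntichainIn r S A) (hST : S ⊆ T) : IsAntichainIn r T A :=
  ⟨hA.1.trans hST, hA.2⟩

lemma IsAntichainIn.subset (hA : IsAntichainIn r S A) (hBA : B ⊆ A) : IsAntichainIn r S B :=
  ⟨(Finset.coe_subset.2 hBA).trans hA.1, fun x hx y hy => hA.2 x (hBA hx) y (hBA hy)⟩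

lemma IsAntichainIn.eq_of_rel (hA : IsAntichainIn r S A) (hx : x ∈ A) (hy : y ∈ A)
    (hxy : r x y) : x = y :=
  by_contra fun hne => (hA.2 x hx y hy hne).1 hxy

lemma IsAntichainIn.eq_of_mem_chain {K : Set α} (hA : IsAntichainIn r S A) (hK : IsChain r K)
    (hx : x ∈ A) (hy : y ∈ A) (hxK : x ∈ K) (hyK : y ∈ K) : x = y := by
  by_contra hne
  exact (hK hxK hyK hne).elim (hA.2 x hx y hy hne).1 (hA.2 x hx y hy hne).2

end IsAntichainIn

section Dilworth

variable {α ι : Type*}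

/-- The subposet induced on `S` has width at most `w`: no antichain in `S` has more than `w`
elements. In contrast with `IsWidthOn`, the bound need not be attained. -/
def HasWidthLE [LE α] (S : Set α) (w : ℕ) : Prop :=
  ∀ A : Finset α, IsAntichainIn (· ≤ ·) S A → A.card ≤ w

/-- The sets `C i` are chains which together cover `S`. They may overlap and leave `S`. -/
def IsChainCover [LE α] (S : Set α) (C : ι → Set α) : Prop :=
  (∀ i, IsChain (· ≤ ·) (C i)) ∧ S ⊆ ⋃ i, C i

/-- The union of all antichains of size `k` contained in `S`. -/
def antichainUnion [LE α] (S : Set α) (k : ℕ) : Set α :=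
  {x | ∃ A : Finset α, IsAntichainIn (· ≤ ·) S A ∧ A.card = k ∧ x ∈ A}

section LE

variable [LE α] {S T : Set α} {A : Finset α} {C : ι → Set α} {k : ℕ}

lemma HasWidthLE.mono (hT : HasWidthLE T k) (hST : S ⊆ T) : HasWidthLE S k :=
  fun A hA => hT A (hA.mono hST)

lemma exists_antichain_card_eq_of_not_hasWidthLE (hS : ¬ HasWidthLE S k) :
    ∃ A : Finset α, IsAntichainIn (· ≤ ·) S A ∧ A.card = k + 1 := by
  simp only [HasWidthLE, not_forall, not_le] at hS
  obtain ⟨A, hA, hkA⟩ := hS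
  obtain ⟨B, hBA, hB⟩ := Finset.exists_subset_card_eq (Nat.succ_le_of_lt hkA)
  exact ⟨B, hA.subset hBA, hB⟩

lemma antichainUnion_subset : antichainUnion S k ⊆ S := by
  rintro x ⟨A, hA, -, hx⟩
  exact hA.1 hx

lemma IsChainCover.cons {K : Set α} {C : Fin k → Set α} (hK : IsChain (· ≤ ·) K)
    (hC : IsChainCover (S \ K) C) : IsChainCover S (Fin.cons K C : Fin (k + 1) → Set α) := by
  refine ⟨Fin.cases hK hC.1, fun x hx => Set.mem_iUnion.2 ?_⟩
  by_cases hxK : x ∈ K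
  · exact ⟨0, hxK⟩
  · obtain ⟨i, hi⟩ := Set.mem_iUnion.1 (hC.2 ⟨hx, hxK⟩)
    exact ⟨i.succ, hi⟩

/-- Each chain contains at most one element of `A`, so there is no room for one to be missed. -/
lemma IsChainCover.exists_equiv [Fintype ι] (hC : IsChainCover S C)
    (hA : IsAntichainIn (· ≤ ·) S A) (hcard : Fintype.card ι ≤ A.card) :
    ∃ e : A ≃ ι, ∀ (x : A) (i : ι), ↑x ∈ C i ↔ e x = i := by
  choose f hf using fun x : A => Set.mem_iUnion.1 (hC.2 (hA.1 x.2))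
  have f_inj : Function.Injective f := fun x y hxy =>
    Subtype.ext (hA.eq_of_mem_chain (hC.1 (f x)) x.2 y.2 (hf x) (hxy ▸ hf y))
  have f_bij : Function.Bijective f := f_inj.bijective_of_nat_card_le (by simpa using hcard)
  refine ⟨Equiv.ofBijective f f_bij, fun x i => ⟨fun hx => ?_, fun hx => hx ▸ hf x⟩⟩
  obtain ⟨y, rfl⟩ := f_bij.2 i
  exact congrArg f (Subtype.ext (hA.eq_of_mem_chain (hC.1 (f y)) x.2 y.2 hx (hf y)))

lemma IsChainCover.exists_mem_inter [Fintype ι] (hC : IsChainCover S C)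
    (hA : IsAntichainIn (· ≤ ·) S A) (hcard : Fintype.card ι ≤ A.card) (i : ι) :
    ∃ x ∈ A, x ∈ C i := by
  obtain ⟨e, he⟩ := hC.exists_equiv hA hcard
  exact ⟨e.symm i, (e.symm i).2, (he _ i).2 (e.apply_symm_apply i)⟩

lemma IsChainCover.index_eq [Fintype ι] (hC : IsChainCover S C)
    (hA : IsAntichainIn (· ≤ ·) S A) (hcard : Fintype.card ι ≤ A.card) {x : α} (hx : x ∈ A)
    {i j : ι} (hi : x ∈ C i) (hj : x ∈ C j) : i = j := by
  obtain ⟨e, he⟩ := hC.exists_equiv hA hcard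
  exact ((he ⟨x, hx⟩ i).1 hi).symm.trans ((he ⟨x, hx⟩ j).1 hj)

end LE

variable [Preorder α] {S : Set α} {w : ℕ}

lemma IsChainCover.exists_isGreatest {C : Fin w → Set α} (hC : IsChainCover S C) (hS : S.Finite)
    {A : Finset α} (hA : IsAntichainIn (· ≤ ·) S A) (hAw : A.card = w) (i : Fin w) :
    ∃ x, IsGreatest (C i ∩ antichainUnion S w) x := by
  obtain ⟨y, hyA, hyC⟩ := hC.exists_mem_inter hA (by simp [hAw]) i
  have hne : (C i ∩ antichainUnion S w).Nonempty := ⟨y, hyC, A, hA, hAw, hyA⟩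
  have hfin : (C i ∩ antichainUnion S w).Finite :=
    hS.subset (Set.inter_subset_right.trans antichainUnion_subset)
  obtain ⟨x, hx⟩ := hfin.exists_maximal hne
  refine ⟨x, hx.prop, fun y hy => ?_⟩
  exact ((hC.1 i).total hy.1 hx.prop.1).elim id fun hxy => hx.le_of_ge hy hxy

lemma IsChainCover.eq_of_isGreatest_le {C : Fin w → Set α} (hC : IsChainCover S C) {x : Fin w → α}
    (hx : ∀ i, IsGreatest (C i ∩ antichainUnion S w) (x i)) {i j : Fin w} (hij : x i ≤ x j) :
    i = j := by
  obtain ⟨A, hA, hAw, hjA⟩ := (hx j).1.2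
  have hcard : Fintype.card (Fin w) ≤ A.card := by simp [hAw]
  obtain ⟨y, hyA, hyC⟩ := hC.exists_mem_inter hA hcard i
  have hyx : y ≤ x i := (hx i).2 ⟨hyC, A, hA, hAw, hyA⟩
  obtain rfl : y = x j := hA.eq_of_rel hyA hjA (hyx.trans hij)
  exact hC.index_eq hA hcard hjA hyC (hx j).1.1

/-- Otherwise `a` and the `x i` would form an antichain of size `w + 1` in `S`. -/
lemma exists_isGreatest_le_of_maximal {a : α} (ha : Maximal (· ∈ S) a) (hw : HasWidthLE S w)
    {C : Fin w → Set α} (hC : IsChainCover (S \ {a}) C) {x : Fin w → α}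
    (hx : ∀ i, IsGreatest (C i ∩ antichainUnion (S \ {a}) w) (x i)) : ∃ i, x i ≤ a := by
  classical
  by_contra! hxa
  have hxS (i : Fin w) : x i ∈ S \ {a} := antichainUnion_subset (hx i).1.2
  have hax (i : Fin w) : ¬ a ≤ x i := fun h => hxa i (ha.le_of_ge (hxS i).1 h)
  have x_inj : Function.Injective x := fun i j h => hC.eq_of_isGreatest_le hx h.le
  have hanti : IsAntichainIn (· ≤ ·) S (insert a (Finset.univ.image x)) := by
    refine ⟨by simpa [Set.insert_subset_iff, ha.prop, Set.range_subset_iff] using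
      fun i => (hxS i).1, ?_⟩
    have hxx {i j : Fin w} (hij : x i ≠ x j) : ¬ x i ≤ x j :=
      fun h => hij (congrArg x (hC.eq_of_isGreatest_le hx h))
    simp only [Finset.mem_insert, Finset.mem_image, Finset.mem_univ, true_and]
    rintro _ (rfl | ⟨i, rfl⟩) _ (rfl | ⟨j, rfl⟩) hne
    · exact absurd rfl hne
    · exact ⟨hax j, hxa j⟩
    · exact ⟨hxa i, hax i⟩
    · exact ⟨hxx hne, hxx hne.symm⟩
  have hcard : (insert a (Finset.univ.image x)).card = w + 1 := by
    rw [Finset.card_insert_of_notMem (by simpa using fun i => (hxS i).2),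
      Finset.card_image_of_injective _ x_inj, Finset.card_univ, Fintype.card_fin]
  exact absurd (hw _ hanti) (by omega)

lemma hasWidthLE_sdiff_insert_inter_Iic {a : α} {C : Fin (w + 1) → Set α}
    (hC : IsChainCover (S \ {a}) C) {i : Fin (w + 1)} {x : α}
    (hx : IsGreatest (C i ∩ antichainUnion (S \ {a}) (w + 1)) x) :
    HasWidthLE (S \ insert a (C i ∩ Set.Iic x)) w := by
  by_contra hw
  obtain ⟨A, hA, hAw⟩ := exists_antichain_card_eq_of_not_hasWidthLE hw
  have hA' : IsAntichainIn (· ≤ ·) (S \ {a}) A :=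
    hA.mono (Set.sdiff_subset_sdiff_right (Set.singleton_subset_iff.2 (Set.mem_insert _ _)))
  obtain ⟨y, hyA, hyC⟩ := hC.exists_mem_inter hA' (by simp [hAw]) i
  have hyx : y ≤ x := hx.2 ⟨hyC, A, hA', hAw, hyA⟩
  exact (hA.1 hyA).2 (Set.mem_insert_of_mem _ ⟨hyC, hyx⟩)

lemma isChain_insert_inter_Iic {K : Set α} (hK : IsChain (· ≤ ·) K) {a x : α} (hxa : x ≤ a) :
    IsChain (· ≤ ·) (insert a (K ∩ Set.Iic x)) :=
  (hK.mono Set.inter_subset_left).insert fun _ hz _ => Or.inr (hz.2.trans hxa)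

/-- The inductive step of Galvin's proof of Dilworth's theorem. -/
lemma exists_isChain_hasWidthLE_sdiff (hS : S.Finite) {a : α} (ha : Maximal (· ∈ S) a)
    (hw : HasWidthLE S (w + 1)) {C : Fin (w + 1) → Set α} (hC : IsChainCover (S \ {a}) C) :
    ∃ K, IsChain (· ≤ ·) K ∧ a ∈ K ∧ HasWidthLE (S \ K) w := by
  by_cases hwa : HasWidthLE (S \ {a}) w
  · exact ⟨{a}, Set.subsingleton_singleton.isChain, rfl, hwa⟩
  obtain ⟨A, hA, hAw⟩ := exists_antichain_card_eq_of_not_hasWidthLE hwa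
  choose x hx using hC.exists_isGreatest hS.sdiff hA hAw
  obtain ⟨i, hia⟩ := exists_isGreatest_le_of_maximal ha hw hC hx
  exact ⟨insert a (C i ∩ Set.Iic (x i)), isChain_insert_inter_Iic (hC.1 i) hia,
    Set.mem_insert _ _, hasWidthLE_sdiff_insert_inter_Iic hC (hx i)⟩

theorem exists_isChainCover_of_finite (hS : S.Finite) (hw : HasWidthLE S w) :
    ∃ C : Fin w → Set α, IsChainCover S C := by
  induction hn : S.ncard using Nat.strong_induction_on generalizing S w with
  | _ n ih =>
    obtain rfl | hne := S.eq_empty_or_nonempty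
    · exact ⟨fun _ => ∅, fun _ => IsChain.empty, Set.empty_subset _⟩
    obtain ⟨a, ha⟩ := hS.exists_maximal hne
    have ih_diff {K : Set α} (haK : a ∈ K) {v : ℕ} (hv : HasWidthLE (S \ K) v) :
        ∃ C : Fin v → Set α, IsChainCover (S \ K) C :=
      ih _ (hn ▸ Set.ncard_lt_ncard (Set.sdiff_ssubset_left_iff.2 ⟨a, ha.prop, haK⟩) hS)
        hS.sdiff hv rfl
    obtain ⟨v, rfl⟩ : ∃ v, w = v + 1 := by
      have : 1 ≤ w := by simpa using hw {a} ⟨by simpa using ha.prop, by simp⟩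
      exact ⟨w - 1, by omega⟩
    obtain ⟨C, hC⟩ := ih_diff (Set.mem_singleton a) (hw.mono Set.sdiff_subset)
    obtain ⟨K, hK, haK, hKw⟩ := exists_isChain_hasWidthLE_sdiff hS ha hw hC
    obtain ⟨D, hD⟩ := ih_diff haK hKw
    exact ⟨_, hD.cons hK⟩

/-- **Dilworth's theorem** for posets of finite width, which may be infinite. -/
theorem exists_isChainCover (hw : HasWidthLE S w) : ∃ C : Fin w → Set α, IsChainCover S C := by
  choose C hC using fun s : Finset α =>
    exists_isChainCover_of_finite (s.finite_toSet.inter_of_left S) (hw.mono Set.inter_subset_right)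
  obtain ⟨χ, hχ⟩ := Finset.rado_selection fun s x => {i | x ∈ C s i}
  refine ⟨fun i => {x | i ∈ χ x}, fun i x hx y hy hne => ?_, fun x hx => ?_⟩
  · classical
    obtain ⟨t, -, ht⟩ := hχ {x, y}
    have hxt : x ∈ C t i := (ht x (by simp)).subset hx
    have hyt : y ∈ C t i := (ht y (by simp)).subset hy
    exact (hC t).1 i hxt hyt hne
  · obtain ⟨t, hxt, ht⟩ := hχ {x}
    have hx_mem : x ∈ ↑t ∩ S := ⟨hxt (Finset.mem_singleton_self x), hx⟩
    obtain ⟨i, hi⟩ := Set.mem_iUnion.1 ((hC t).2 hx_mem)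
    exact Set.mem_iUnion.2 ⟨i, (ht x (Finset.mem_singleton_self x)).superset hi⟩

end Dilworth

section LinearExtensions

variable {α : Type*} [PartialOrder α]

/-- The order of `α` with every `c ∈ C` raised above all elements that are not above `c`, closed
under transitivity. -/
def raisedOrder (C : Set α) (x y : α) : Prop :=
  x ≤ y ∨ ∃ c ∈ C, ¬ c ≤ x ∧ c ≤ y

lemma isPartialOrder_raisedOrder {C : Set α} (hC : IsChain (· ≤ ·) C) :
    IsPartialOrder α (raisedOrder C) where
  refl _ := Or.inl le_rfl
  trans := by
    rintro x y z (hxy | ⟨c, hc, hcx, hcy⟩) (hyz | ⟨d, hd, hdy, hdz⟩)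
    · exact Or.inl (hxy.trans hyz)
    · exact Or.inr ⟨d, hd, fun hdx => hdy (hdx.trans hxy), hdz⟩
    · exact Or.inr ⟨c, hc, hcx, hcy.trans hyz⟩
    · have hcd : c ≤ d := (hC.total hc hd).resolve_right fun hdc => hdy (hdc.trans hcy)
      exact Or.inr ⟨c, hc, hcx, hcd.trans hdz⟩
  antisymm := by
    rintro x y (hxy | ⟨c, hc, hcx, hcy⟩) (hyx | ⟨d, hd, hdy, hdx⟩)
    · exact hxy.antisymm hyx
    · exact absurd (hdx.trans hxy) hdy
    · exact absurd (hcy.trans hyx) hcx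
    · exact (hC.total hc hd).elim (fun hcd => absurd (hcd.trans hdx) hcx)
        fun hdc => absurd (hdc.trans hcy) hdy

lemma exists_isLinExt_forall_mem_chain {C : Set α} (hC : IsChain (· ≤ ·) C) :
    ∃ L : α → α → Prop, IsLinExt (· ≤ ·) L ∧ ∀ c ∈ C, ∀ y, L c y → c ≤ y := by
  have := isPartialOrder_raisedOrder hC
  obtain ⟨L, hL, hle⟩ := extend_partialOrder (raisedOrder C)
  refine ⟨L, ⟨hL, fun x y hxy => hle x y (Or.inl hxy)⟩, fun c hc y hcy => ?_⟩
  by_contra hncy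
  have hyc : L y c := hle y c (Or.inr ⟨c, hc, hncy, le_rfl⟩)
  exact hncy (hL.antisymm c y hcy hyc).le

/-- `L` with the maximal elements of `α` moved to the top and their order reversed. -/
def reverseMax (L : α → α → Prop) (x y : α) : Prop :=
  (¬ IsMax x ∧ (IsMax y ∨ L x y)) ∨ (IsMax x ∧ IsMax y ∧ L y x)

lemma isLinExt_reverseMax {L : α → α → Prop} (hL : IsLinExt (· ≤ ·) L) :
    IsLinExt (· ≤ ·) (reverseMax L) := by
  obtain ⟨hlin, hext⟩ := hL
  refine ⟨{
    refl := by grind [reverseMax, hlin.refl]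
    trans := by grind [reverseMax, hlin.trans]
    antisymm := by grind [reverseMax, hlin.antisymm]
    total := by grind [reverseMax, hlin.total] }, fun x y hxy => ?_⟩
  by_cases hx : IsMax x
  · exact Or.inr ⟨hx, hx.mono hxy, hext y x (hx hxy)⟩
  · exact Or.inl ⟨hx, Or.inr (hext x y hxy)⟩

theorem hasDimLE_add_one_of_isChainCover_not_isMax {w : ℕ} {C : Fin w → Set α}
    (hC : IsChainCover {x : α | ¬ IsMax x} C) (hne : ∃ x : α, ¬ IsMax x) :
    HasDimLE (α := α) (· ≤ ·) (w + 1) := by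
  obtain ⟨x₀, hx₀⟩ := hne
  obtain ⟨i₀, -⟩ := Set.mem_iUnion.1 (hC.2 hx₀)
  choose L hL hLC using fun i => exists_isLinExt_forall_mem_chain (hC.1 i)
  have hLs : ∀ j, IsLinExt (· ≤ ·)
      ((Fin.cons (reverseMax (L i₀)) L : Fin (w + 1) → α → α → Prop) j) :=
    Fin.cases (isLinExt_reverseMax (hL i₀)) hL
  refine ⟨_, hLs, fun x y => ⟨fun hxy j => (hLs j).2 x y hxy, fun h => ?_⟩⟩
  by_cases hx : IsMax x
  · have hyx : L i₀ y x := ((h 0).resolve_left fun hx' => hx'.1 hx).2.2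
    exact ((hL i₀).1.antisymm x y (h i₀.succ) hyx).le
  · obtain ⟨i, hi⟩ := Set.mem_iUnion.1 (hC.2 hx)
    exact hLC i x hi y (h i.succ)

end LinearExtensions

theorem dim_le_width_nonmax_add_one_general {α : Type*}
    (r : α → α → Prop) (hr : IsPartialOrder α r)
    (hna : ∃ x y : α, x ≠ y ∧ r x y)
    (w : ℕ) (hw : IsWidthOn r {x : α | ∃ y : α, r x y ∧ y ≠ x} w) :
    HasDimLE r (w + 1) := by
  let _ : PartialOrder α :=
    { le := r
      le_refl := hr.refl
      le_trans := hr.trans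
      le_antisymm := hr.antisymm }
  have nonmax_eq : {x : α | ∃ y : α, r x y ∧ y ≠ x} = {x | ¬ IsMax x} := by
    ext x
    simp only [Set.mem_ofPred_eq, not_isMax_iff, lt_iff_le_and_ne, ne_comm]
    rfl
  have hwidth : HasWidthLE {x : α | ¬ IsMax x} w := fun A hA => hw.2 ⟨A, nonmax_eq ▸ hA, rfl⟩
  obtain ⟨C, hC⟩ := exists_isChainCover hwidth
  obtain ⟨x, y, hne, hxy⟩ := hna
  exact hasDimLE_add_one_of_isChainCover_not_isMax hC ⟨x, nonmax_eq.subset ⟨y, hxy, hne.symm⟩⟩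

/-- If a finite poset `P` is not an antichain and `w` is the width of the
subposet induced on the set of non-maximal elements `P - Max(P)`, then the
dimension of `P` is at most `w + 1`. -/
theorem dim_le_width_nonmax_add_one {α : Type*} [Fintype α]
    (r : α → α → Prop) (hr : IsPartialOrder α r)
    (hna : ∃ x y : α, x ≠ y ∧ r x y)
    (w : ℕ) (hw : IsWidthOn r {x : α | ∃ y : α, r x y ∧ y ≠ x} w) :
    HasDimLE r (w + 1) :=
  dim_le_width_nonmax_add_one_general r hr hna w hw
end

section
/- For n ≥ 1, let D_n be the poset with 3n + 1 elements x, a_1,…,a_n, b_1,…,b_n, c_1,…,c_n and strict order relations: a_i < x for all i; x < c_j for all j; a_i < c_j for all i, j; a_i < b_i and b_i < c_i for each i; and no other strict relations. Then for every n ≥ 17, the dimension of D_n is exactly 4: D_n has a realizer of size 4 but no realizer of size 3. -/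
/-- The strict order relations of the poset `D_n`: the element `x` is `none`,
and `some (l, i)` is `a_i`, `b_i`, `c_i` for `l = 0, 1, 2` respectively.
The relations are `a_i < x`, `x < c_j`, `a_i < c_j`, `a_i < b_i`, `b_i < c_i`,
and no others. -/
def Dstrict (n : ℕ) : Option (Fin 3 × Fin n) → Option (Fin 3 × Fin n) → Prop
  | some p, none => p.1 = 0
  | none, some q => q.1 = 2
  | some p, some q =>
      (p.1 = 0 ∧ q.1 = 2) ∨ (p.1 = 0 ∧ q.1 = 1 ∧ p.2 = q.2) ∨
        (p.1 = 1 ∧ q.1 = 2 ∧ p.2 = q.2)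
  | none, none => False

/-- The order relation of the poset `D_n` (reflexive closure of `Dstrict`). -/
def Drel (n : ℕ) (u v : Option (Fin 3 × Fin n)) : Prop :=
  u = v ∨ Dstrict n u v

/-!
Lower bound. Attach to each `b_j` the set of extensions of a realizer in which it lies above `x`.
Suppose `b_j` and `b_k` (`j ≠ k`) have the same set. The inequalities `b_j > c_k` and `b_k > c_j`
must each occur in some extension, but not in the same one, since `b_j > c_k > b_k > c_j > b_j`
would be a cycle; both force the respective `b` above `x`, so the common set has at least two
elements. Dually, by `a_j > b_k` and `a_k > b_j`, so does its complement, and the realizer has size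
at least `4`. In a realizer of size `3` these sets are thus pairwise distinct, and as `b_j` is
incomparable to `x` they are nonempty and proper: there are at most `2 ^ 3 - 2 = 6` of them.

Upper bound. Two extensions put all `b`'s above `x`, interleaved with the `c`'s as
`b_1 c_1 b_2 c_2 ⋯` and as `b_n c_n ⋯ b_1 c_1`; two put all `b`'s below `x`, interleaved with
the `a`'s in the same two ways. As the two interleavings list the indices in opposite orders,
elements with different indices can compare the same way in all four extensions only if one is an
`a` and the other a `c`.
-/

open Finset

section Realizers

variable {α : Type*} {r : α → α → Prop} {t : ℕ}

namespace IsLinExt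

variable {L : α → α → Prop}

lemma rel_of_not_rel (hL : IsLinExt r L) {x b c : α} (hxc : r x c) (hbc : ¬ L b c) : L x b := by
  have := hL.1
  exact _root_.trans (hL.2 x c hxc) ((total_of L b c).resolve_left hbc)

lemma not_rel_of_not_rel (hL : IsLinExt r L) {a x b : α} (hax : r a x) (hab : ¬ L a b) :
    ¬ L x b := by
  have := hL.1
  exact fun hxb => hab (_root_.trans (hL.2 a x hax) hxb)

lemma rel_or_rel_of_swap (hL : IsLinExt r L) {u u' v v' : α} (h : r u v') (h' : r u' v) :
    L u v ∨ L u' v' := by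
  have := hL.1
  exact (total_of L u v).imp_right fun hvu =>
    _root_.trans (hL.2 u' v h') (_root_.trans hvu (hL.2 u v' h))

end IsLinExt

lemma hasDimLE_of_injective {β : Type*} [LinearOrder β] (f : Fin t → α → β)
    (hinj : ∀ j, Function.Injective (f j)) (hf : ∀ u v, r u v ↔ ∀ j, f j u ≤ f j v) :
    HasDimLE r t := by
  refine ⟨fun j u v => f j u ≤ f j v, fun j => ⟨?_, fun u v h => (hf u v).1 h j⟩, hf⟩
  exact
    { refl := fun _ => le_rfl
      trans := fun _ _ _ => le_trans
      antisymm := fun _ _ huv hvu => hinj j (huv.antisymm hvu)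
      total := fun _ _ => le_total _ _ }

lemma HasDimLE.isPartialOrder [NeZero t] (h : HasDimLE r t) : IsPartialOrder α r := by
  obtain ⟨Ls, hlin, hr⟩ := h
  have := fun j => (hlin j).1
  exact
    { refl := fun u => (hr u u).2 fun j => refl_of (Ls j) u
      trans := fun u v w huv hvw => (hr u w).2 fun j =>
        trans_of (Ls j) ((hr u v).1 huv j) ((hr v w).1 hvw j)
      antisymm := fun u v huv hvu =>
        antisymm_of (Ls 0) ((hr u v).1 huv 0) ((hr v u).1 hvu 0) }

open Classical in
/-- The set of those linear extensions, among `Ls`, in which `b` lies above `x`. -/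
noncomputable def extensionsAbove (Ls : Fin t → α → α → Prop) (x b : α) : Finset (Fin t) :=
  {s | Ls s x b}

lemma mem_extensionsAbove {Ls : Fin t → α → α → Prop} {x b : α} {s : Fin t} :
    s ∈ extensionsAbove Ls x b ↔ Ls s x b := by
  simp only [extensionsAbove, mem_filter_univ]

namespace IsRealizer

variable {Ls : Fin t → α → α → Prop}

lemma exists_not_rel (h : IsRealizer r Ls) {u v : α} (huv : ¬ r u v) : ∃ s, ¬ Ls s u v := by
  rwa [← not_forall, ← h.2]

lemma exists_ne_not_rel_of_swap (h : IsRealizer r Ls) {u u' v v' : α} (huv : ¬ r u v)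
    (hu'v' : ¬ r u' v') (huv' : r u v') (hu'v : r u' v) :
    ∃ s s', s ≠ s' ∧ ¬ Ls s u v ∧ ¬ Ls s' u' v' := by
  obtain ⟨s, hs⟩ := h.exists_not_rel huv
  obtain ⟨s', hs'⟩ := h.exists_not_rel hu'v'
  refine ⟨s, s', ?_, hs, hs'⟩
  rintro rfl
  exact ((h.1 s).rel_or_rel_of_swap huv' hu'v).elim hs hs'

lemma one_lt_card_extensionsAbove (h : IsRealizer r Ls) {x b b' c c' : α}
    (heq : extensionsAbove Ls x b = extensionsAbove Ls x b') (hxc : r x c) (hxc' : r x c')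
    (hbc : r b c) (hb'c' : r b' c') (hbc' : ¬ r b c') (hb'c : ¬ r b' c) :
    1 < #(extensionsAbove Ls x b) := by
  obtain ⟨s, s', hne, hs, hs'⟩ := h.exists_ne_not_rel_of_swap hbc' hb'c hbc hb'c'
  refine one_lt_card.2 ⟨s, ?_, s', ?_, hne⟩
  · exact mem_extensionsAbove.2 ((h.1 s).rel_of_not_rel hxc' hs)
  · exact heq ▸ mem_extensionsAbove.2 ((h.1 s').rel_of_not_rel hxc hs')

lemma one_lt_card_compl_extensionsAbove (h : IsRealizer r Ls) {x a a' b b' : α}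
    (heq : extensionsAbove Ls x b = extensionsAbove Ls x b') (hax : r a x) (ha'x : r a' x)
    (hab : r a b) (ha'b' : r a' b') (hab' : ¬ r a b') (ha'b : ¬ r a' b) :
    1 < #(extensionsAbove Ls x b)ᶜ := by
  obtain ⟨s, s', hne, hs, hs'⟩ := h.exists_ne_not_rel_of_swap hab' ha'b hab ha'b'
  refine one_lt_card.2 ⟨s, ?_, s', ?_, hne⟩
  · rw [heq, mem_compl, mem_extensionsAbove]
    exact (h.1 s).not_rel_of_not_rel hax hs
  · rw [mem_compl, mem_extensionsAbove]
    exact (h.1 s').not_rel_of_not_rel ha'x hs'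

lemma extensionsAbove_nonempty (h : IsRealizer r Ls) {x b : α} (hbx : ¬ r b x) :
    (extensionsAbove Ls x b).Nonempty := by
  obtain ⟨s, hs⟩ := h.exists_not_rel hbx
  have := (h.1 s).1
  exact ⟨s, mem_extensionsAbove.2 ((total_of (Ls s) b x).resolve_left hs)⟩

lemma extensionsAbove_ssubset_univ (h : IsRealizer r Ls) {x b : α} (hxb : ¬ r x b) :
    extensionsAbove Ls x b ⊂ univ := by
  obtain ⟨s, hs⟩ := h.exists_not_rel hxb
  exact ssubset_univ_iff.2 fun huniv => hs (mem_extensionsAbove.1 (huniv ▸ mem_univ s))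

end IsRealizer

end Realizers

section LowerBound

variable {n t : ℕ}

lemma extensionsAbove_injective
    {Ls : Fin t → Option (Fin 3 × Fin n) → Option (Fin 3 × Fin n) → Prop}
    (ht : t < 4) (h : IsRealizer (Drel n) Ls) :
    Function.Injective fun j : Fin n => extensionsAbove Ls none (some (1, j)) := by
  intro j k heq
  by_contra hne
  have habove : 1 < #(extensionsAbove Ls none (some (1, j))) := by
    apply h.one_lt_card_extensionsAbove heq (c := some (2, j)) (c' := some (2, k)) <;>
      simp [Drel, Dstrict, hne, Ne.symm hne]
  have hbelow : 1 < #(extensionsAbove Ls none (some (1, j)))ᶜ := by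
    apply h.one_lt_card_compl_extensionsAbove heq (a := some (0, j)) (a' := some (0, k)) <;>
      simp [Drel, Dstrict, hne, Ne.symm hne]
  have hsum := card_add_card_compl (extensionsAbove Ls none (some (1, j)))
  rw [Fintype.card_fin] at hsum
  omega

lemma le_two_pow_sub_two_of_hasDimLE (ht : t < 4) (h : HasDimLE (Drel n) t) : n ≤ 2 ^ t - 2 := by
  obtain ⟨Ls, h⟩ := h
  rcases n.eq_zero_or_pos with rfl | hn
  · exact Nat.zero_le _
  have hproper (j : Fin n) : extensionsAbove Ls none (some (1, j)) ⊂ univ :=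
    h.extensionsAbove_ssubset_univ (by simp [Drel, Dstrict])
  have hmem (j : Fin n) :
      extensionsAbove Ls none (some (1, j)) ∈ (univ : Finset (Fin t)).ssubsets.erase ∅ :=
    mem_erase.2 ⟨(h.extensionsAbove_nonempty (by simp [Drel, Dstrict])).ne_empty,
      mem_ssubsets.2 (hproper j)⟩
  have hempty : ∅ ∈ (univ : Finset (Fin t)).ssubsets :=
    mem_ssubsets.2 ((empty_subset _).trans_ssubset (hproper ⟨0, hn⟩))
  calc
    n = #(univ : Finset (Fin n)) := (card_fin n).symm
    _ ≤ #((univ : Finset (Fin t)).ssubsets.erase ∅) :=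
      card_le_card_of_injOn _ (fun j _ => hmem j) (extensionsAbove_injective ht h).injOn
    _ = 2 ^ t - 2 := by
      rw [card_erase_of_mem hempty, ssubsets, card_erase_of_mem (mem_powerset_self _),
        card_powerset, card_fin, Nat.sub_sub]

end LowerBound

section UpperBound

variable {n : ℕ}

/-- Sort key of a linear extension of `D_n` made of three consecutive blocks, numbered `0`, `1`, `2`
from the bottom: the `a_i` are in block `0`, `x` in block `1`, the `c_i` in block `2` and the `b_i`
in block `β`. A block is sorted by increasing `e i`, and then with `a_i` below `b_i` below `c_i`. -/
def blockKey (β : Fin 3) (e : Fin n → ℤ) : Option (Fin 3 × Fin n) → Fin 3 ×ₗ ℤ ×ₗ Fin 3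
  | none => toLex (1, toLex (0, 0))
  | some (l, i) => toLex (![0, β, 2] l, toLex (e i, l))

lemma blockKey_some_le_some {β l m : Fin 3} {e : Fin n → ℤ} {i k : Fin n} :
    blockKey β e (some (l, i)) ≤ blockKey β e (some (m, k)) ↔
      ![0, β, 2] l < ![0, β, 2] m ∨
        ![0, β, 2] l = ![0, β, 2] m ∧ (e i < e k ∨ e i = e k ∧ l ≤ m) := by
  simp only [blockKey, Prod.Lex.toLex_le_toLex]

lemma blockKey_injective (β : Fin 3) {e : Fin n → ℤ} (he : Function.Injective e) :
    Function.Injective (blockKey β e) := by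
  rintro (_ | ⟨l, i⟩) (_ | ⟨m, k⟩) h <;>
    simp only [blockKey, EmbeddingLike.apply_eq_iff_eq, Prod.mk.injEq] at h
  · rfl
  · obtain ⟨hblock, -, rfl⟩ := h
    simp at hblock
  · obtain ⟨hblock, -, rfl⟩ := h
    simp at hblock
  · rw [he h.2.1, h.2.2]

lemma blockKey_le_of_drel {u v : Option (Fin 3 × Fin n)} (β : Fin 3) (e : Fin n → ℤ)
    (h : Drel n u v) : blockKey β e u ≤ blockKey β e v := by
  rcases h with rfl | h
  · exact le_rfl
  rcases u with _ | ⟨l, i⟩ <;> rcases v with _ | ⟨m, k⟩ <;> simp only [Dstrict] at h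
  · simp [h, blockKey, Prod.Lex.toLex_le_toLex]
  · simp [h, blockKey, Prod.Lex.toLex_le_toLex]
  · rw [blockKey_some_le_some]
    rcases h with ⟨rfl, rfl⟩ | ⟨rfl, rfl, rfl⟩ | ⟨rfl, rfl, rfl⟩
    · simp
    · simpa using (Fin.zero_le β).lt_or_eq
    · simpa using (Fin.le_last β).lt_or_eq

lemma block_lt_block_of_blockKey_le {β l m : Fin 3} {e : Fin n → ℤ} {i k : Fin n}
    (hik : e i ≠ e k) (h : blockKey β e (some (l, i)) ≤ blockKey β e (some (m, k)))
    (hneg : blockKey β (-e) (some (l, i)) ≤ blockKey β (-e) (some (m, k))) :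
    ![0, β, 2] l < ![0, β, 2] m := by
  simp only [blockKey_some_le_some, Pi.neg_apply] at h hneg
  omega

lemma level_le_level_of_blockKey_le {β l m : Fin 3} {e : Fin n → ℤ} {i : Fin n}
    (h : blockKey β e (some (l, i)) ≤ blockKey β e (some (m, i))) : l ≤ m := by
  have hblock : ∀ β l m : Fin 3, ![0, β, 2] l < ![0, β, 2] m → l ≤ m := by decide
  rcases blockKey_some_le_some.1 h with hlt | ⟨-, hlt | ⟨-, hle⟩⟩
  · exact hblock β l m hlt
  · exact absurd hlt (lt_irrefl _)
  · exact hle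

lemma drel_of_blockKey_le {e : Fin n → ℤ} (he : Function.Injective e)
    {u v : Option (Fin 3 × Fin n)}
    (h₀ : blockKey 0 e u ≤ blockKey 0 e v) (h₀' : blockKey 0 (-e) u ≤ blockKey 0 (-e) v)
    (h₂ : blockKey 2 e u ≤ blockKey 2 e v) (h₂' : blockKey 2 (-e) u ≤ blockKey 2 (-e) v) :
    Drel n u v := by
  rcases u with _ | ⟨l, i⟩ <;> rcases v with _ | ⟨m, k⟩
  · exact Or.inl rfl
  · have hm : ∀ m : Fin 3, 1 ≤ ![(0 : Fin 3), 0, 2] m → m = 2 := by decide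
    exact Or.inr (hm m (Prod.Lex.monotone_fst _ _ h₀))
  · have hl : ∀ l : Fin 3, ![(0 : Fin 3), 2, 2] l ≤ 1 → l = 0 := by decide
    exact Or.inr (hl l (Prod.Lex.monotone_fst _ _ h₂))
  · rcases eq_or_ne i k with rfl | hik
    · have hlevel : ∀ l m : Fin 3, l ≤ m →
          l = m ∨ l = 0 ∧ m = 2 ∨ l = 0 ∧ m = 1 ∨ l = 1 ∧ m = 2 := by decide
      simpa [Drel, Dstrict] using hlevel l m (level_le_level_of_blockKey_le h₀)
    · have hblock : ∀ l m : Fin 3, ![0, 0, 2] l < ![(0 : Fin 3), 0, 2] m →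
          ![0, 2, 2] l < ![(0 : Fin 3), 2, 2] m → l = 0 ∧ m = 2 := by decide
      exact Or.inr (Or.inl (hblock l m (block_lt_block_of_blockKey_le (he.ne hik) h₀ h₀')
        (block_lt_block_of_blockKey_le (he.ne hik) h₂ h₂')))

lemma hasDimLE_four (n : ℕ) : HasDimLE (Drel n) 4 := by
  let e : Fin n → ℤ := fun i => (i : ℕ)
  have he : Function.Injective e := Nat.cast_injective.comp Fin.val_injective
  have hneg : Function.Injective (-e) := neg_injective.comp he
  refine hasDimLE_of_injective
    ![blockKey 0 e, blockKey 0 (-e), blockKey 2 e, blockKey 2 (-e)] ?_ fun u v => ⟨?_, ?_⟩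
  · simp [Fin.forall_fin_succ, blockKey_injective, he, hneg]
  · intro h
    simp [Fin.forall_fin_succ, blockKey_le_of_drel, h]
  · exact fun h => drel_of_blockKey_le he (h 0) (h 1) (h 2) (h 3)

end UpperBound

theorem diamonds_poset_dim_four_general (n : ℕ) (hn : 7 ≤ n) :
    IsPartialOrder (Option (Fin 3 × Fin n)) (Drel n) ∧
      HasDimLE (Drel n) 4 ∧ ¬ HasDimLE (Drel n) 3 := by
  refine ⟨(hasDimLE_four n).isPartialOrder, hasDimLE_four n, fun h => ?_⟩
  have hle : n ≤ 2 ^ 3 - 2 := le_two_pow_sub_two_of_hasDimLE (by norm_num) h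
  omega

/-- For every `n ≥ 17`, `D_n` is a poset of dimension exactly `4`:
it has a realizer of size `4` but none of size `3`. -/
theorem diamonds_poset_dim_four (n : ℕ) (hn : 17 ≤ n) :
    IsPartialOrder (Option (Fin 3 × Fin n)) (Drel n) ∧
      HasDimLE (Drel n) 4 ∧ ¬ HasDimLE (Drel n) 3 :=
  diamonds_poset_dim_four_general n (by omega)
end

section
/- Fix an integer d ≥ 2. For d ≥ 2 and n ≥ 2, define the poset P(n,d) as follows: start with the base poset W = (Fin n)^d (d-tuples with entries in {0,…,n−1}, ordered coordinatewise), and for each w ∈ W adjoin three new elements x_w, y_w, z_w; the order of P(n,d) is the partial order generated by the order on W together with the relations x_w < y_w, y_w < z_w, x_w < w, and w < z_w for each w ∈ W. Then there exists n_0 such that for all n ≥ n_0, the poset P(n,d) has no realizer of size d + 1; equivalently, the dimension of P(n,d) is at least d + 2. -/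
/-- The order relation of the poset `P(n,d)`.  The ground set consists of pairs
`(w, l)` with `w ∈ (Fin n)^d`: `(w, 0)` is the element `w` of the base poset
`W = (Fin n)^d` (ordered coordinatewise), and `(w, 1), (w, 2), (w, 3)` are the
attached elements `x_w, y_w, z_w`.  The order is the partial order generated by
the order on `W` together with `x_w < y_w < z_w`, `x_w < w` and `w < z_w`;
explicitly, besides reflexivity: `(u,0) ≤ (w,0)`, `(u,0) ≤ z_w`, `x_u ≤ (w,0)`
and `x_u ≤ z_w` each hold iff `u ≤ w` coordinatewise, while `x_u ≤ y_w` and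
`y_u ≤ z_w` hold iff `u = w`. -/
def Prel (n d : ℕ) (p q : (Fin d → Fin n) × Fin 4) : Prop :=
  p = q ∨
    (p.2 = 0 ∧ q.2 = 0 ∧ ∀ i, p.1 i ≤ q.1 i) ∨
    (p.2 = 0 ∧ q.2 = 3 ∧ ∀ i, p.1 i ≤ q.1 i) ∨
    (p.2 = 1 ∧ q.2 = 0 ∧ ∀ i, p.1 i ≤ q.1 i) ∨
    (p.2 = 1 ∧ q.2 = 3 ∧ ∀ i, p.1 i ≤ q.1 i) ∨
    (p.2 = 1 ∧ q.2 = 2 ∧ p.1 = q.1) ∨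
    (p.2 = 2 ∧ q.2 = 3 ∧ p.1 = q.1)

/-!
Let `L` realize `P(n,d)`, and let `b`, `t` be the least and greatest grid points. As `y_w` is
incomparable to both, some `L i` puts `y_w` below `b` and some other `L j` puts it above `t`; then
`x_w` is below the whole grid in `L i`, and `z_w` is above the whole grid in `L j`. Colour `w` by
`(i, j)`. By the Hales–Jewett theorem, for large `n` some copy of the lattice of subsets of
`{1, …, d}` in the grid is monochromatic. The pairs `(x, z)` at its `d` atoms and their complements
form a standard example, so they are reversed in `d` distinct members of `L`, and none of these is
`L i` or `L j`. Hence `L` has at least `d + 2` members.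
-/

open Finset

section LinearExtensions

variable {α : Type*} {r : α → α → Prop}

/- The pairs `(p, q)` and `(p', q')` form an alternating cycle: reversing both would give
`q < p ≤ q' < p' ≤ q`. -/
theorem IsLinExt.le_of_not_le_of_cross {L : α → α → Prop} (hL : IsLinExt r L) {p q p' q' : α}
    (h : r p q') (h' : r p' q) (hpq : ¬ L p q) : L p' q' := by
  have := hL.1
  have hqp : L q p := (total_of L p q).resolve_left hpq
  exact _root_.trans (hL.2 _ _ h') (_root_.trans hqp (hL.2 _ _ h))

namespace IsRealizer

variable {t : ℕ} {L : Fin t → α → α → Prop}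

theorem exists_not_le (hL : IsRealizer r L) {p q : α} (hpq : ¬ r p q) : ∃ k, ¬ L k p q := by
  rwa [hL.2, not_forall] at hpq

theorem refl (hL : IsRealizer r L) (p : α) : r p p :=
  (hL.2 p p).2 fun k => have := (hL.1 k).1; refl_of (L k) p

theorem card_add_card_le_of_standardExample {ι : Type*} [Fintype ι] (hL : IsRealizer r L)
    {p q : ι → α} (hpq : ∀ c, ¬ r (p c) (q c))
    (hcross : Pairwise fun c c' => r (p c) (q c')) {S : Finset (Fin t)}
    (hS : ∀ k ∈ S, ∀ c, L k (p c) (q c)) : Fintype.card ι + #S ≤ t := by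
  choose k hk using fun c => hL.exists_not_le (hpq c)
  have hinj : Function.Injective k := fun c c' hcc' => by
    by_contra hne
    exact hk c' <| hcc' ▸
      (hL.1 (k c)).le_of_not_le_of_cross (hcross hne) (hcross (Ne.symm hne)) (hk c)
  have hdisj : Disjoint (univ.map ⟨k, hinj⟩) S := by
    rw [disjoint_left]
    intro _ hmem hkS
    obtain ⟨c, -, rfl⟩ := mem_map.1 hmem
    exact hk c (hS _ hkS c)
  calc Fintype.card ι + #S = #((univ.map ⟨k, hinj⟩).disjUnion S hdisj) := by
        rw [card_disjUnion, card_map, card_univ]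
    _ ≤ t := card_finset_fin_le _

end IsRealizer

end LinearExtensions

/-- The part of the structure of `P(n,d)` that forces a large dimension: elements `x w`, `y w`,
`z w` attached to the points `w` of a base poset `W`, inside an arbitrary relation `r`. The elements
`b` and `t` play the roles of the least and greatest elements of `W`; no other point of `W` has to
be represented in `r`. -/
structure AttachedTriples {α : Type*} (r : α → α → Prop) (W : Type*) [LE W] where
  (b t : α)
  (x y z : W → α)
  b_le_t : r b t
  not_b_le_y : ∀ w, ¬ r b (y w)
  not_y_le_t : ∀ w, ¬ r (y w) t
  x_le_y : ∀ w, r (x w) (y w)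
  y_le_z : ∀ w, r (y w) (z w)
  x_le_t : ∀ w, r (x w) t
  b_le_z : ∀ w, r b (z w)
  x_le_z_iff : ∀ u w, r (x u) (z w) ↔ u ≤ w

namespace AttachedTriples

variable {α W σ : Type*} [LE W] {r : α → α → Prop} {m : ℕ} {L : Fin m → α → α → Prop}

/-- The pair `(i, j)` is a colour of `w` if `y w` lies strictly below `b` in `L i` and strictly
above `t` in `L j`. For linear orders, negated inequalities express this strictness. -/
def IsColor (T : AttachedTriples r W) (L : Fin m → α → α → Prop) (w : W)
    (k : Fin m × Fin m) : Prop :=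
  ¬ L k.1 T.b (T.y w) ∧ ¬ L k.2 (T.y w) T.t

theorem exists_isColor (T : AttachedTriples r W) (hL : IsRealizer r L) (w : W) :
    ∃ k, T.IsColor L w k := by
  obtain ⟨i, hi⟩ := hL.exists_not_le (T.not_b_le_y w)
  obtain ⟨j, hj⟩ := hL.exists_not_le (T.not_y_le_t w)
  exact ⟨(i, j), hi, hj⟩

theorem IsColor.fst_ne_snd {T : AttachedTriples r W} {w : W} {k : Fin m × Fin m}
    (hk : T.IsColor L w k) (hL : IsRealizer r L) : k.1 ≠ k.2 := fun h =>
  hk.2 <| h ▸ (hL.1 k.1).le_of_not_le_of_cross T.b_le_t (hL.refl (T.y w)) hk.1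

theorem card_add_two_le_of_isColor [Fintype σ] (T : AttachedTriples r W)
    (hL : IsRealizer r L) (g : Finset σ ↪o W) {k : Fin m × Fin m}
    (hk : ∀ A, T.IsColor L (g A) k) : Fintype.card σ + 2 ≤ m := by
  classical
  have hle_fst (u w : Finset σ) : L k.1 (T.x (g u)) (T.z (g w)) :=
    (hL.1 k.1).le_of_not_le_of_cross (T.b_le_z _) (T.x_le_y _) (hk u).1
  have hle_snd (u w : Finset σ) : L k.2 (T.x (g u)) (T.z (g w)) :=
    (hL.1 k.2).le_of_not_le_of_cross (T.y_le_z _) (T.x_le_t _) (hk w).2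
  rw [← card_pair ((hk ∅).fst_ne_snd hL)]
  refine hL.card_add_card_le_of_standardExample (p := fun c => T.x (g {c}))
    (q := fun c => T.z (g {c}ᶜ)) (fun c => ?_) (fun c c' hne => ?_) (S := {k.1, k.2}) ?_
  · simp [T.x_le_z_iff, g.map_rel_iff]
  · simpa [T.x_le_z_iff, g.map_rel_iff] using hne.symm
  · simp [hle_fst, hle_snd]

end AttachedTriples

section HalesJewett

variable {σ ι : Type*} [DecidableEq σ] [Fintype ι]

theorem card_mem_line_le_card_mem_line_iff (l : Combinatorics.Line (Finset σ) ι)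
    {A B : Finset σ} {c : σ} : #{s | c ∈ l A s} ≤ #{s | c ∈ l B s} ↔ (c ∈ A → c ∈ B) := by
  have mono {A B : Finset σ} (h : c ∈ A → c ∈ B) (s : ι) (hs : c ∈ l A s) : c ∈ l B s := by
    rw [Combinatorics.Line.apply_def] at hs ⊢
    cases hl : l.idxFun s <;> simp_all
  refine ⟨fun hle hA => ?_, fun h => card_le_card <| monotone_filter_right _ fun s _ => mono h s⟩
  by_contra hB
  obtain ⟨s, hs⟩ := l.proper
  have hsA : c ∈ l A s := by rwa [l.apply_none _ _ hs]
  have hsB : c ∉ l B s := by rwa [l.apply_none _ _ hs]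
  have hssub : ({s | c ∈ l B s} : Finset ι) ⊂ ({s | c ∈ l A s} : Finset ι) :=
    (ssubset_iff_of_subset <| monotone_filter_right _ fun s _ => mono (absurd · hB) s).2
      ⟨s, (mem_filter_univ s).2 hsA, mt (mem_filter_univ s).1 hsB⟩
  exact hle.not_gt (card_lt_card hssub)

/- The words of a Hales–Jewett line over the alphabet `Finset σ` form a copy of `Finset σ` in the
grid once each coordinate counts the letters containing it. -/
theorem exists_mono_finset_orderEmbedding (σ κ : Type*) [Finite σ] [Finite κ] :
    ∃ N : ℕ, ∀ n, N < n → ∀ C : (σ → Fin n) → κ,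
      ∃ (g : Finset σ ↪o (σ → Fin n)) (k : κ), ∀ A, C (g A) = k := by
  classical
  obtain ⟨ι, _, hι⟩ := Combinatorics.Line.exists_mono_in_high_dimension (Finset σ) κ
  refine ⟨Fintype.card ι, fun n hn C => ?_⟩
  let count (f : ι → Finset σ) (c : σ) : Fin n := ⟨#{s | c ∈ f s}, (card_le_univ _).trans_lt hn⟩
  obtain ⟨l, k, hl⟩ := hι fun f => C (count f)
  refine ⟨OrderEmbedding.ofMapLEIff (fun A => count (l A)) fun A B => ?_, k, hl⟩
  exact forall_congr' fun c => card_mem_line_le_card_mem_line_iff l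

end HalesJewett

/-- The triples `x_w, y_w, z_w` of `P(n,d)`. -/
noncomputable def AttachedTriples.prel (n d : ℕ) [NeZero n] :
    AttachedTriples (Prel n d) (Fin d → Fin n) where
  b := (⊥, 0)
  t := (⊤, 0)
  x w := (w, 1)
  y w := (w, 2)
  z w := (w, 3)
  b_le_t := by simp [Prel]
  not_b_le_y := by simp [Prel]
  not_y_le_t := by simp [Prel]
  x_le_y := by simp [Prel]
  y_le_z := by simp [Prel]
  x_le_t := by simp [Prel]
  b_le_z := by simp [Prel]
  x_le_z_iff := by simp [Prel, Pi.le_def]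

theorem lower_bound_construction_general (d : ℕ) :
    ∃ N : ℕ, ∀ n, N < n → ∀ {α : Type*} {r : α → α → Prop},
      AttachedTriples r (Fin d → Fin n) → ¬ HasDimLE r (d + 1) := by
  obtain ⟨N, hN⟩ := exists_mono_finset_orderEmbedding (Fin d) (Fin (d + 1) × Fin (d + 1))
  refine ⟨N, fun n hn α r T ⟨L, hL⟩ => ?_⟩
  choose color hcolor using T.exists_isColor hL
  obtain ⟨g, k, hg⟩ := hN n hn color
  have hcard := T.card_add_two_le_of_isColor hL g fun A => hg A ▸ hcolor (g A)
  rw [Fintype.card_fin] at hcard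
  omega

/-- For every fixed `d ≥ 2` there is `n₀` such that for all `n ≥ n₀` the poset
`P(n,d)` has no realizer of size `d + 1`; hence its dimension is at
least `d + 2`. -/
theorem lower_bound_construction (d : ℕ) (hd : 2 ≤ d) :
    ∃ n₀ : ℕ, ∀ n : ℕ, n₀ ≤ n → ¬ HasDimLE (Prel n d) (d + 1) := by
  obtain ⟨N, hN⟩ := lower_bound_construction_general d
  exact ⟨N + 1, fun n hn => have : NeZero n := ⟨by omega⟩; hN n hn (.prel n d)⟩
end
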